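/- arXiv:0809.3811 — 2 statements merged into one kernel-verified Lean document; each statement's English description precedes it below -/
import Mathlib

section
/- Let α : ℝ → ℝ² be a smooth simple closed curve of length L parametrized by arc length, oriented counterclockwise, enclosing a domain Ω, with curvature κ. Let gᵢ(s) = ⟨α'(s), eᵢ⟩ for i = 1,2, and let a > 0, l > 0. If for i = 1,2 the inequality (π²/l²)∫₀ᴸ gᵢ² ds + ∫₀ᴸ (gᵢ')² ds ≥ ∫₀ᴸ (κ(s)² + 2a·(α₁α₂' − α₂α₁')(s))·gᵢ(s)² ds holds, then l ≤ (π/2)·√(L/(a·area(Ω))). -/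
open MeasureTheory Real

/-- The local straightening map. -/
def tubeMap (α : ℝ → ℝ × ℝ) (v : ℝ × ℝ) (q : ℝ × ℝ) : ℝ × ℝ := α q.1 + q.2 • v

/-- The derivative of the straightening map. -/
noncomputable def tubeDeriv (w v : ℝ × ℝ) : ℝ × ℝ →L[ℝ] ℝ × ℝ :=
  (Matrix.toLin (.finTwoProd ℝ) (.finTwoProd ℝ) !![w.1, v.1; w.2, v.2]).toContinuousLinearMap

lemma tubeDeriv_apply (w v q : ℝ × ℝ) : tubeDeriv w v q = q.1 • w + q.2 • v := by
  unfold tubeDeriv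
  rw [Matrix.toLin_finTwoProd_toContinuousLinearMap]
  ext <;> simp <;> ring

lemma tubeDeriv_det (w v : ℝ × ℝ) : (tubeDeriv w v).det = w.1 * v.2 - w.2 * v.1 := by
  unfold tubeDeriv
  simp only [LinearMap.det_toContinuousLinearMap, LinearMap.det_toLin,
    Matrix.det_fin_two_of]
  ring

lemma tubeMap_contDiff {α : ℝ → ℝ × ℝ} (hα : ContDiff ℝ 1 α) (v : ℝ × ℝ) :
    ContDiff ℝ 1 (tubeMap α v) := by
  unfold tubeMap
  fun_prop

lemma tubeMap_hasFDerivAt {α : ℝ → ℝ × ℝ} (hα : ContDiff ℝ 1 α) (v q : ℝ × ℝ) :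
    HasFDerivAt (tubeMap α v) (tubeDeriv (deriv α q.1) v) q := by
  have h1 : HasDerivAt α (deriv α q.1) q.1 :=
    ((hα.differentiable (by norm_num)) q.1).hasDerivAt
  have h2 := (h1.hasFDerivAt.comp q (hasFDerivAt_fst (𝕜 := ℝ) (E := ℝ) (F := ℝ))).add
    ((hasFDerivAt_snd (𝕜 := ℝ) (E := ℝ) (F := ℝ) (p := q)).smul_const v)
  have h3 : tubeDeriv (deriv α q.1) v =
      ContinuousLinearMap.toSpanSingleton ℝ (deriv α q.1) ∘SL ContinuousLinearMap.fst ℝ ℝ ℝ +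
        (ContinuousLinearMap.snd ℝ ℝ ℝ).smulRight v := by
    apply ContinuousLinearMap.ext
    intro p
    rw [tubeDeriv_apply]
    simp
  rw [h3]
  exact h2

/-- The inverse of the derivative at the centre. -/
noncomputable def tubeEquiv (w : ℝ × ℝ) (hw : w.1 ^ 2 + w.2 ^ 2 = 1) : (ℝ × ℝ) ≃L[ℝ] ℝ × ℝ :=
  ContinuousLinearEquiv.equivOfInverse (tubeDeriv w (-w.2, w.1))
    (tubeDeriv (w.1, -w.2) (w.2, w.1))
    (by
      intro q
      simp only [tubeDeriv_apply]
      ext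
      · simp
        linear_combination q.1 * hw
      · simp
        linear_combination q.2 * hw)
    (by
      intro q
      simp only [tubeDeriv_apply]
      ext
      · simp
        linear_combination q.1 * hw
      · simp
        linear_combination q.2 * hw)

lemma per_int {α : ℝ → ℝ × ℝ} {L : ℝ} (hper : ∀ s, α (s + L) = α s) (n : ℤ) (s : ℝ) :
    α (s - n • L) = α s :=
  Function.Periodic.sub_zsmul_eq (f := α) (c := L) hper n

lemma eq_mod {α : ℝ → ℝ × ℝ} {L : ℝ} (hL : 0 < L) (hper : ∀ s, α (s + L) = α s)
    (hsimple : Set.InjOn α (Set.Ico 0 L)) {s s' : ℝ} (h : α s = α s') :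
    ∃ n : ℤ, s - s' = n * L := by
  have e1 := self_sub_toIcoDiv_zsmul hL 0 s
  have e2 := self_sub_toIcoDiv_zsmul hL 0 s'
  have m1 := toIcoMod_mem_Ico hL 0 s
  have m2 := toIcoMod_mem_Ico hL 0 s'
  rw [zero_add] at m1 m2
  have := hsimple m1 m2 (by rw [← e1, ← e2, per_int hper, per_int hper, h])
  refine ⟨toIcoDiv hL 0 s - toIcoDiv hL 0 s', ?_⟩
  rw [← e1, ← e2] at this
  simp only [zsmul_eq_mul] at this
  push_cast
  linarith

/-- A good box for the straightening map at `s₀`. -/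
structure IsChart (α : ℝ → ℝ × ℝ) (L s₀ δ : ℝ) : Prop where
  pos : 0 < δ
  le : δ ≤ L / 2
  inj : Set.InjOn (tubeMap α (-(deriv α s₀).2, (deriv α s₀).1))
        (Set.Icc (s₀ - δ) (s₀ + δ) ×ˢ Set.Icc (-δ) δ)
  opn : ∀ U ⊆ Set.Icc (s₀ - δ) (s₀ + δ) ×ˢ Set.Icc (-δ) δ, IsOpen U →
        IsOpen (tubeMap α (-(deriv α s₀).2, (deriv α s₀).1) '' U)
  curve : ∀ q ∈ Set.Icc (s₀ - δ) (s₀ + δ) ×ˢ Set.Icc (-δ) δ, ∀ s',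
        tubeMap α (-(deriv α s₀).2, (deriv α s₀).1) q = α s' → q.2 = 0
  det : ∀ s ∈ Set.Icc (s₀ - δ) (s₀ + δ),
        0 < (deriv α s).1 * (deriv α s₀).1 - (deriv α s).2 * (-(deriv α s₀).2)

lemma local_chart {α : ℝ → ℝ × ℝ} {L : ℝ} (hL : 0 < L) (hα : ContDiff ℝ 1 α)
    (harc : ∀ s, (deriv α s).1 ^ 2 + (deriv α s).2 ^ 2 = 1)
    (hper : ∀ s, α (s + L) = α s)
    (hsimple : Set.InjOn α (Set.Ico 0 L)) (s₀ : ℝ) :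
    ∃ δ, IsChart α L s₀ δ := by
  set v : ℝ × ℝ := (-(deriv α s₀).2, (deriv α s₀).1) with hv
  have hstrict : HasStrictFDerivAt (tubeMap α v)
      ((tubeEquiv (deriv α s₀) (harc s₀) : (ℝ × ℝ) ≃L[ℝ] ℝ × ℝ) : ℝ × ℝ →L[ℝ] ℝ × ℝ) (s₀, 0) :=
    (tubeMap_contDiff hα v).contDiffAt.hasStrictFDerivAt'
      (tubeMap_hasFDerivAt hα v (s₀, 0)) (by norm_num)
  set e := HasStrictFDerivAt.toOpenPartialHomeomorph (tubeMap α v) hstrict with he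
  have hmem : (s₀, (0 : ℝ)) ∈ e.source := hstrict.mem_toOpenPartialHomeomorph_source
  have hecoe : (e : ℝ × ℝ → ℝ × ℝ) = tubeMap α v := rfl
  have hcα : Continuous α := hα.continuous
  have hcd : Continuous (deriv α) := hα.continuous_deriv (by norm_num)
  have hcT : Continuous (tubeMap α v) := (tubeMap_contDiff hα v).continuous
  have hbox : ∀ W : Set (ℝ × ℝ), W ∈ nhds (s₀, (0 : ℝ)) → ∃ δ > 0,
      Set.Icc (s₀ - δ) (s₀ + δ) ×ˢ Set.Icc (-δ) δ ⊆ W := by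
    intro W hW
    obtain ⟨δ, hδ, hsub⟩ := Metric.nhds_basis_closedBall.mem_iff.1 hW
    refine ⟨δ, hδ, ?_⟩
    rw [← closedBall_prod_same, Real.closedBall_eq_Icc, Real.closedBall_eq_Icc] at hsub
    simpa using hsub
  obtain ⟨δ₁, hδ₁, hsub₁⟩ := hbox e.source (e.open_source.mem_nhds hmem)
  set η := min δ₁ (L / 2) with hη
  have hη0 : 0 < η := lt_min hδ₁ (by linarith)
  set K := α '' (Set.Icc (s₀ + η) (s₀ + L - η)) with hK
  have hKc : IsClosed K := (isCompact_Icc.image hcα).isClosed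
  have hKn : α s₀ ∉ K := by
    rintro ⟨s, ⟨h1, h2⟩, h3⟩
    obtain ⟨n, hn⟩ := eq_mod hL hper hsimple h3
    have a1 : (0 : ℝ) < n := by
      by_contra hc
      push Not at hc
      nlinarith
    have a2 : (n : ℝ) < 1 := by
      by_contra hc
      push Not at hc
      nlinarith
    norm_cast at a1 a2
    omega
  have hT0 : tubeMap α v (s₀, 0) = α s₀ := by simp [tubeMap]
  have hW2 : tubeMap α v ⁻¹' Kᶜ ∈ nhds (s₀, (0 : ℝ)) :=
    hcT.continuousAt.preimage_mem_nhds (hKc.isOpen_compl.mem_nhds (by rw [hT0]; exact hKn))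
  have hW3 : {q : ℝ × ℝ | 0 < (deriv α q.1).1 * (deriv α s₀).1
      - (deriv α q.1).2 * (-(deriv α s₀).2)} ∈ nhds (s₀, (0 : ℝ)) := by
    apply IsOpen.mem_nhds
    · exact isOpen_lt (by fun_prop) (by fun_prop)
    · have := harc s₀
      simp only [Set.mem_ofPred_eq]
      nlinarith
  obtain ⟨δ₂, hδ₂, hsub₂⟩ := hbox _ (Filter.inter_mem hW2 hW3)
  set δ := min δ₂ η with hδd
  have hδ0 : 0 < δ := lt_min hδ₂ hη0
  have hδη : δ ≤ η := min_le_right _ _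
  have hηδ : η ≤ δ₁ := min_le_left _ _
  have hηL : η ≤ L / 2 := min_le_right _ _
  have hδδ₂ : δ ≤ δ₂ := min_le_left _ _
  have hmono : ∀ {a b : ℝ}, a ≤ b → Set.Icc (s₀ - a) (s₀ + a) ×ˢ Set.Icc (-a) a ⊆
      Set.Icc (s₀ - b) (s₀ + b) ×ˢ Set.Icc (-b) b := by
    intro a b hab
    exact Set.prod_mono (Set.Icc_subset_Icc (by linarith) (by linarith))
      (Set.Icc_subset_Icc (by linarith) (by linarith))
  have hinj : Set.InjOn (tubeMap α v) (Set.Icc (s₀ - δ₁) (s₀ + δ₁) ×ˢ Set.Icc (-δ₁) δ₁) :=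
    e.injOn.mono hsub₁
  have hsub3 := (hmono (hδη.trans hηδ))
  refine ⟨δ, ⟨hδ0, hδη.trans hηL, hinj.mono hsub3, ?_, ?_, ?_⟩⟩
  · intro U hU hUo
    exact e.isOpen_image_of_subset_source hUo (hU.trans (hsub3.trans hsub₁))
  · intro q hq s' hqs
    have e1 := self_sub_toIcoDiv_zsmul hL (s₀ - η) s'
    have m1 := toIcoMod_mem_Ico hL (s₀ - η) s'
    set t := toIcoMod hL (s₀ - η) s'
    have ht : α t = α s' := by rw [← e1, per_int hper]
    rw [← ht] at hqs
    by_cases hc : t < s₀ + η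
    · have : tubeMap α v q = tubeMap α v (t, 0) := by rw [hqs]; simp [tubeMap]
      have := hinj (hsub3 hq) ⟨⟨by linarith [m1.1], by linarith⟩, ⟨by simp; linarith, by simp; linarith⟩⟩ this
      rw [this]
    · push Not at hc
      exact absurd ⟨t, ⟨hc, by linarith [m1.2]⟩, hqs.symm⟩ (hsub₂ (hmono hδδ₂ hq)).1
  · intro s hs
    have : (s, (0 : ℝ)) ∈ Set.Icc (s₀ - δ) (s₀ + δ) ×ˢ Set.Icc (-δ) δ :=
      ⟨hs, ⟨by simp; linarith, by simp; linarith⟩⟩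
    exact (hsub₂ (hmono hδδ₂ this)).2

lemma side_dichotomy {Ω S : Set (ℝ × ℝ)} (hΩ : IsOpen Ω) (hS : IsPreconnected S)
    (hd : ∀ p ∈ S, p ∉ frontier Ω) : S ⊆ Ω ∨ S ⊆ (closure Ω)ᶜ := by
  refine isPreconnected_iff_subset_of_disjoint.1 hS Ω (closure Ω)ᶜ hΩ
    isClosed_closure.isOpen_compl ?_ ?_
  · intro p hp
    have := hd p hp
    rw [hΩ.frontier_eq] at this
    by_cases h : p ∈ Ω
    · exact Or.inl h
    · exact Or.inr fun hc => this ⟨hc, h⟩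
  · ext p
    simp only [Set.mem_inter_iff, Set.mem_compl_iff, Set.mem_empty_iff_false, iff_false]
    rintro ⟨_, h1, h2⟩
    exact h2 (subset_closure h1)

section sides

variable {α : ℝ → ℝ × ℝ} {L : ℝ} {Ω : Set (ℝ × ℝ)}

lemma chart_left (hα : ContDiff ℝ 1 α) (hΩopen : IsOpen Ω)
    (hfr : ∀ p, p ∈ frontier Ω ↔ ∃ s, α s = p)
    (hccw : ∀ s, ∃ ε > 0, ∀ t ∈ Set.Ioo (0 : ℝ) ε,
      α s + t • (-(deriv α s).2, (deriv α s).1) ∈ Ω) {s₀ δ : ℝ} (hc : IsChart α L s₀ δ) :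
    tubeMap α (-(deriv α s₀).2, (deriv α s₀).1) ''
      (Set.Ioo (s₀ - δ) (s₀ + δ) ×ˢ Set.Ioo 0 δ) ⊆ Ω := by
  have hδ := hc.pos
  have hpre : IsPreconnected (tubeMap α (-(deriv α s₀).2, (deriv α s₀).1) ''
      (Set.Ioo (s₀ - δ) (s₀ + δ) ×ˢ Set.Ioo 0 δ)) :=
    (isPreconnected_Ioo.prod isPreconnected_Ioo).image _
      (tubeMap_contDiff hα _).continuous.continuousOn
  have hd : ∀ p ∈ tubeMap α (-(deriv α s₀).2, (deriv α s₀).1) ''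
      (Set.Ioo (s₀ - δ) (s₀ + δ) ×ˢ Set.Ioo 0 δ), p ∉ frontier Ω := by
    rintro p ⟨q, ⟨hq1, hq2⟩, rfl⟩ hp
    obtain ⟨s, hs⟩ := (hfr _).1 hp
    have := hc.curve q ⟨Set.Ioo_subset_Icc_self hq1, ⟨by linarith [hq2.1], hq2.2.le⟩⟩ s hs.symm
    linarith [hq2.1]
  rcases side_dichotomy hΩopen hpre hd with h | h
  · exact h
  · exfalso
    obtain ⟨ε, hε, h1⟩ := hccw s₀
    set t := min ε δ / 2 with ht
    have ht0 : 0 < min ε δ := lt_min hε hδ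
    have h2 := min_le_left ε δ
    have h3 := min_le_right ε δ
    have h4 := h1 t ⟨by linarith, by linarith⟩
    refine h ⟨(s₀, t), ⟨⟨by linarith, by linarith⟩, ⟨by simp only; linarith, by simp only; linarith⟩⟩, rfl⟩
      (subset_closure h4)

lemma chart_right_or (hα : ContDiff ℝ 1 α) (hΩopen : IsOpen Ω)
    (hfr : ∀ p, p ∈ frontier Ω ↔ ∃ s, α s = p) {s₀ δ : ℝ} (hc : IsChart α L s₀ δ) :
    tubeMap α (-(deriv α s₀).2, (deriv α s₀).1) ''
      (Set.Ioo (s₀ - δ) (s₀ + δ) ×ˢ Set.Ioo (-δ) 0) ⊆ Ω ∨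
    tubeMap α (-(deriv α s₀).2, (deriv α s₀).1) ''
      (Set.Ioo (s₀ - δ) (s₀ + δ) ×ˢ Set.Ioo (-δ) 0) ⊆ (closure Ω)ᶜ := by
  have hδ := hc.pos
  have hpre : IsPreconnected (tubeMap α (-(deriv α s₀).2, (deriv α s₀).1) ''
      (Set.Ioo (s₀ - δ) (s₀ + δ) ×ˢ Set.Ioo (-δ) 0)) :=
    (isPreconnected_Ioo.prod isPreconnected_Ioo).image _
      (tubeMap_contDiff hα _).continuous.continuousOn
  refine side_dichotomy hΩopen hpre ?_
  rintro p ⟨q, ⟨hq1, hq2⟩, rfl⟩ hp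
  obtain ⟨s, hs⟩ := (hfr _).1 hp
  have := hc.curve q ⟨Set.Ioo_subset_Icc_self hq1, ⟨hq2.1.le, by linarith [hq2.2]⟩⟩ s hs.symm
  linarith [hq2.2]

lemma chart_right (hL : 0 < L) (hα : ContDiff ℝ 1 α)
    (harc : ∀ s, (deriv α s).1 ^ 2 + (deriv α s).2 ^ 2 = 1)
    (hper : ∀ s, α (s + L) = α s)
    (hsimple : Set.InjOn α (Set.Ico 0 L))
    (hΩopen : IsOpen Ω) (hΩbdd : Bornology.IsBounded Ω)
    (hfr : ∀ p, p ∈ frontier Ω ↔ ∃ s, α s = p)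
    (hccw : ∀ s, ∃ ε > 0, ∀ t ∈ Set.Ioo (0 : ℝ) ε,
      α s + t • (-(deriv α s).2, (deriv α s).1) ∈ Ω) {s₀ δ : ℝ} (hc : IsChart α L s₀ δ) :
    tubeMap α (-(deriv α s₀).2, (deriv α s₀).1) ''
      (Set.Ioo (s₀ - δ) (s₀ + δ) ×ˢ Set.Ioo (-δ) 0) ⊆ (closure Ω)ᶜ := by
  rcases chart_right_or hα hΩopen hfr hc with h | h
  swap
  · exact h
  exfalso
  set A := {s | α s ∈ interior (closure Ω)} with hA
  have hAo : IsOpen A := isOpen_interior.preimage hα.continuous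
  have hcurve_cl : ∀ s, α s ∈ closure Ω := fun s =>
    frontier_subset_closure ((hfr _).2 ⟨s, rfl⟩)
  have key1 : ∀ s₁ δ₁, IsChart α L s₁ δ₁ → tubeMap α (-(deriv α s₁).2, (deriv α s₁).1) ''
      (Set.Ioo (s₁ - δ₁) (s₁ + δ₁) ×ˢ Set.Ioo (-δ₁) 0) ⊆ Ω → s₁ ∈ A := by
    intro s₁ δ₁ hc₁ h₁
    have hδ := hc₁.pos
    have hl := chart_left hα hΩopen hfr hccw hc₁
    refine mem_interior.2 ⟨_, ?_, hc₁.opn (Set.Ioo (s₁ - δ₁) (s₁ + δ₁) ×ˢ Set.Ioo (-δ₁) δ₁)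
      (Set.prod_mono Set.Ioo_subset_Icc_self Set.Ioo_subset_Icc_self) (isOpen_Ioo.prod isOpen_Ioo),
      ⟨(s₁, 0), ⟨⟨by simp only; linarith, by simp only; linarith⟩,
        ⟨by simp only; linarith, by simp only; linarith⟩⟩, by simp [tubeMap]⟩⟩
    rintro p ⟨q, ⟨hq1, hq2⟩, rfl⟩
    rcases lt_trichotomy q.2 0 with h0 | h0 | h0
    · exact subset_closure (h₁ ⟨q, ⟨hq1, ⟨hq2.1, h0⟩⟩, rfl⟩)
    · have : tubeMap α (-(deriv α s₁).2, (deriv α s₁).1) q = α q.1 := by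
        simp [tubeMap, h0]
      rw [this]
      exact hcurve_cl _
    · exact subset_closure (hl ⟨q, ⟨hq1, ⟨h0, hq2.2⟩⟩, rfl⟩)
  have hAc : IsOpen Aᶜ := by
    rw [isOpen_iff_mem_nhds]
    intro s₁ hs₁
    obtain ⟨δ₁, hc₁⟩ := local_chart hL hα harc hper hsimple s₁
    have hδ := hc₁.pos
    rcases chart_right_or hα hΩopen hfr hc₁ with h₁ | h₁
    · exact absurd (key1 _ _ hc₁ h₁) hs₁
    · refine Filter.mem_of_superset
        (Ioo_mem_nhds (show s₁ - δ₁ < s₁ by linarith) (show s₁ < s₁ + δ₁ by linarith)) ?_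
      intro s hs hsA
      have hcont : Continuous fun t : ℝ =>
          tubeMap α (-(deriv α s₁).2, (deriv α s₁).1) (s, t) :=
        (tubeMap_contDiff hα _).continuous.comp (by fun_prop)
      have h0 : tubeMap α (-(deriv α s₁).2, (deriv α s₁).1) (s, 0) = α s := by simp [tubeMap]
      have hev : ∀ᶠ t in nhds (0 : ℝ), tubeMap α (-(deriv α s₁).2, (deriv α s₁).1) (s, t) ∈
          interior (closure Ω) :=
        hcont.continuousAt.preimage_mem_nhds (isOpen_interior.mem_nhds (by rw [h0]; exact hsA))
      obtain ⟨ε, hε, hb⟩ := Metric.eventually_nhds_iff.1 hev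
      have m0 : 0 < min ε δ₁ := lt_min hε hδ
      have m1 := min_le_left ε δ₁
      have m2 := min_le_right ε δ₁
      have hin := hb (y := -(min ε δ₁ / 2)) (by
        rw [Real.dist_eq, sub_zero, abs_neg, abs_of_pos (by linarith)]; linarith)
      exact h₁ ⟨(s, -(min ε δ₁ / 2)), ⟨hs, ⟨by simp only; linarith, by simp only; linarith⟩⟩, rfl⟩
        (interior_subset hin)
  have hclopen : IsClopen A := ⟨⟨hAc⟩, hAo⟩
  have hAu : A = Set.univ := hclopen.eq_univ ⟨s₀, key1 _ _ hc h⟩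
  have hcl : IsOpen (closure Ω) := by
    rw [← subset_interior_iff_isOpen]
    intro p hp
    by_cases hpΩ : p ∈ Ω
    · exact (hΩopen.subset_interior_iff.2 subset_closure) hpΩ
    · obtain ⟨s, rfl⟩ := (hfr p).1 (by rw [hΩopen.frontier_eq]; exact ⟨hp, hpΩ⟩)
      have : s ∈ A := hAu ▸ Set.mem_univ s
      exact this
  have hcu : closure Ω = Set.univ := IsClopen.eq_univ ⟨isClosed_closure, hcl⟩ ⟨_, hcurve_cl s₀⟩
  have hb : Bornology.IsBounded (Set.univ : Set (ℝ × ℝ)) := hcu ▸ hΩbdd.closure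
  exact NormedSpace.unbounded_univ ℝ (ℝ × ℝ) hb

end sides

lemma green_chart {α : ℝ → ℝ × ℝ} {L : ℝ} {Ω : Set (ℝ × ℝ)} (hL : 0 < L) (hα : ContDiff ℝ 1 α)
    (hper : ∀ s, α (s + L) = α s)
    (hsimple : Set.InjOn α (Set.Ico 0 L))
    (hΩopen : IsOpen Ω)
    (hfr : ∀ p, p ∈ frontier Ω ↔ ∃ s, α s = p)
    {s₀ δ : ℝ} (hc : IsChart α L s₀ δ)
    (hleft : tubeMap α (-(deriv α s₀).2, (deriv α s₀).1) ''
      (Set.Ioo (s₀ - δ) (s₀ + δ) ×ˢ Set.Ioo 0 δ) ⊆ Ω)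
    (hright : tubeMap α (-(deriv α s₀).2, (deriv α s₀).1) ''
      (Set.Ioo (s₀ - δ) (s₀ + δ) ×ˢ Set.Ioo (-δ) 0) ⊆ (closure Ω)ᶜ)
    {G : ℝ × ℝ → ℝ} (hG : ContDiff ℝ 1 G)
    (hsupp : tsupport G ⊆ tubeMap α (-(deriv α s₀).2, (deriv α s₀).1) ''
      (Set.Ioo (s₀ - δ) (s₀ + δ) ×ˢ Set.Ioo (-δ) δ)) :
    ∫ p in Ω, fderiv ℝ G p (1, 0) = ∫ s in (0 : ℝ)..L, G (α s) * (deriv α s).2 := by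
  have hδ := hc.pos
  have hδL := hc.le
  set v : ℝ × ℝ := (-(deriv α s₀).2, (deriv α s₀).1) with hv
  set Φ := tubeMap α v with hΦ
  set Q := Set.Ioo (s₀ - δ) (s₀ + δ) ×ˢ Set.Ioo (-δ) δ with hQ
  set Qp := Set.Ioo (s₀ - δ) (s₀ + δ) ×ˢ Set.Ioo 0 δ with hQp
  have hQpm : MeasurableSet Qp := measurableSet_Ioo.prod measurableSet_Ioo
  have hQpB : Qp ⊆ Set.Icc (s₀ - δ) (s₀ + δ) ×ˢ Set.Icc (-δ) δ :=
    Set.prod_mono Set.Ioo_subset_Icc_self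
      (Set.Ioo_subset_Icc_self.trans (Set.Icc_subset_Icc (by linarith) le_rfl))
  have hQB : Q ⊆ Set.Icc (s₀ - δ) (s₀ + δ) ×ˢ Set.Icc (-δ) δ :=
    Set.prod_mono Set.Ioo_subset_Icc_self Set.Ioo_subset_Icc_self
  have hGd : Differentiable ℝ G := hG.differentiable (by norm_num)
  have hGc : Continuous (fderiv ℝ G) := hG.continuous_fderiv (by norm_num)
  have hαd : ∀ s, HasDerivAt α (deriv α s) s := fun s =>
    ((hα.differentiable (by norm_num)) s).hasDerivAt
  have hcα : Continuous α := hα.continuous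
  have hcd : Continuous (deriv α) := hα.continuous_deriv (by norm_num)
  have hΦc : Continuous Φ := (tubeMap_contDiff hα v).continuous
  have hG0 : ∀ p, p ∉ Φ '' Q → G p = 0 := fun p hp =>
    image_eq_zero_of_notMem_tsupport fun h => hp (hsupp h)
  have hD0 : ∀ p, p ∉ Φ '' Q → fderiv ℝ G p = 0 := fun p hp =>
    image_eq_zero_of_notMem_tsupport fun h => hp (hsupp (tsupport_fderiv_subset ℝ h))
  have hΦ0 : ∀ s, Φ (s, 0) = α s := fun s => by simp [hΦ, tubeMap]
  have hbd : ∀ q ∈ Set.Icc (s₀ - δ) (s₀ + δ) ×ˢ Set.Icc (-δ) δ, q ∉ Q → G (Φ q) = 0 := by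
    intro q hq hqQ
    apply hG0
    rintro ⟨q', hq', he⟩
    exact hqQ (hc.inj (hQB hq') hq he ▸ hq')
  have step1 : ∫ p in Ω, fderiv ℝ G p (1, 0) = ∫ p in Φ '' Qp, fderiv ℝ G p (1, 0) := by
    apply setIntegral_eq_of_subset_of_forall_sdiff_eq_zero hΩopen.measurableSet hleft
    rintro p ⟨hpΩ, hpn⟩
    rw [hD0 p]
    · rfl
    rintro ⟨q, ⟨hq1, hq2⟩, rfl⟩
    rcases lt_trichotomy q.2 0 with h0 | h0 | h0
    · exact hright ⟨q, ⟨hq1, ⟨hq2.1, h0⟩⟩, rfl⟩ (subset_closure hpΩ)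
    · have h1 : Φ q = α q.1 := by rw [← hΦ0, ← h0]
      have h2 := (hfr (Φ q)).2 ⟨q.1, h1.symm⟩
      rw [hΩopen.frontier_eq] at h2
      exact h2.2 hpΩ
    · exact hpn ⟨q, ⟨hq1, ⟨h0, hq2.2⟩⟩, rfl⟩
  have step2 : ∫ p in Φ '' Qp, fderiv ℝ G p (1, 0) =
      ∫ q in Qp, (v.2 * fderiv ℝ G (Φ q) (deriv α q.1)
        - (deriv α q.1).2 * fderiv ℝ G (Φ q) v) := by
    rw [integral_image_eq_integral_abs_det_fderiv_smul volume hQpm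
      (fun q _ => (tubeMap_hasFDerivAt hα v q).hasFDerivWithinAt) (hc.inj.mono hQpB)]
    apply setIntegral_congr_fun hQpm
    intro q hq
    have hdet := hc.det q.1 (Set.Ioo_subset_Icc_self hq.1)
    have hlin : ∀ w : ℝ × ℝ, fderiv ℝ G (Φ q) w =
        w.1 * fderiv ℝ G (Φ q) (1, 0) + w.2 * fderiv ℝ G (Φ q) (0, 1) := by
      intro w
      have : w = w.1 • ((1 : ℝ), (0 : ℝ)) + w.2 • ((0 : ℝ), (1 : ℝ)) := by ext <;> simp
      conv_lhs => rw [this, map_add, map_smul, map_smul]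
      rfl
    simp only [tubeDeriv_det, smul_eq_mul]
    rw [abs_of_pos (by exact hdet), hlin (deriv α q.1), hlin v]
    ring
  have c1 : Continuous fun q : ℝ × ℝ => fderiv ℝ G (Φ q) (deriv α q.1) :=
    (hGc.comp hΦc).clm_apply (hcd.comp continuous_fst)
  have c2 : Continuous fun q : ℝ × ℝ => fderiv ℝ G (Φ q) v :=
    (hGc.comp hΦc).clm_apply continuous_const
  have hint : ∀ f : ℝ × ℝ → ℝ, Continuous f → IntegrableOn f Qp := fun f hf =>
    (hf.continuousOn.integrableOn_compact (isCompact_Icc.prod isCompact_Icc)).mono_set hQpB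
  have c3 : Continuous fun q : ℝ × ℝ => v.2 * fderiv ℝ G (Φ q) (deriv α q.1) :=
    continuous_const.mul c1
  have c4 : Continuous fun q : ℝ × ℝ => (deriv α q.1).2 * fderiv ℝ G (Φ q) v :=
    ((continuous_snd.comp (hcd.comp continuous_fst))).mul c2
  have hΦs : ∀ s t, HasDerivAt (fun s => G (Φ (s, t))) (fderiv ℝ G (Φ (s, t)) (deriv α s)) s := by
    intro s t
    have h1 : HasDerivAt (fun s => Φ (s, t)) (deriv α s) s := (hαd s).add_const (t • v)
    exact (hGd (Φ (s, t))).hasFDerivAt.comp_hasDerivAt s h1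
  have hΦt : ∀ s t, HasDerivAt (fun t => G (Φ (s, t))) (fderiv ℝ G (Φ (s, t)) v) t := by
    intro s t
    have h1 : HasDerivAt (fun t => Φ (s, t)) v t := by
      have := ((hasDerivAt_id t).smul_const v).const_add (α s)
      simpa [hΦ, tubeMap] using this
    exact (hGd (Φ (s, t))).hasFDerivAt.comp_hasDerivAt t h1
  have i1 : ∫ q in Qp, v.2 * fderiv ℝ G (Φ q) (deriv α q.1) = 0 := by
    rw [hQp, Measure.volume_eq_prod, ← setIntegral_prod_swap, setIntegral_prod]
    · apply integral_eq_zero_of_ae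
      refine (ae_restrict_iff' measurableSet_Ioo).2 (Filter.Eventually.of_forall ?_)
      intro t ht
      simp only [Prod.swap_prod_mk, Pi.zero_apply]
      rw [integral_const_mul, ← integral_Ioc_eq_integral_Ioo,
        ← intervalIntegral.integral_of_le (by linarith),
        intervalIntegral.integral_eq_sub_of_hasDerivAt (fun s _ => hΦs s t)
          ((c1.comp (by fun_prop : Continuous fun s : ℝ => (s, t))).intervalIntegrable _ _)]
      rw [hbd (s₀ + δ, t) ⟨⟨by simp only; linarith, by simp only; linarith⟩,
          ⟨by linarith [ht.1], ht.2.le⟩⟩ (fun h => lt_irrefl _ h.1.2),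
        hbd (s₀ - δ, t) ⟨⟨by simp only; linarith, by simp only; linarith⟩,
          ⟨by linarith [ht.1], ht.2.le⟩⟩ (fun h => lt_irrefl _ h.1.1)]
      simp
    · exact ((c3.comp continuous_swap).continuousOn.integrableOn_compact
        (isCompact_Icc.prod isCompact_Icc)).mono_set
          (Set.prod_mono Set.Ioo_subset_Icc_self Set.Ioo_subset_Icc_self)
  have i2 : ∫ q in Qp, (deriv α q.1).2 * fderiv ℝ G (Φ q) v =
      - ∫ s in (s₀ - δ)..(s₀ + δ), G (α s) * (deriv α s).2 := by
    have hi := hint _ c4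
    rw [hQp, Measure.volume_eq_prod] at hi ⊢
    rw [setIntegral_prod _ hi, intervalIntegral.integral_of_le (by linarith),
      integral_Ioc_eq_integral_Ioo, ← integral_neg]
    apply setIntegral_congr_fun measurableSet_Ioo
    intro s hs
    simp only
    rw [integral_const_mul, ← integral_Ioc_eq_integral_Ioo,
        ← intervalIntegral.integral_of_le (by linarith),
        intervalIntegral.integral_eq_sub_of_hasDerivAt (fun t _ => hΦt s t)
          ((c2.comp (by fun_prop : Continuous fun t : ℝ => (s, t))).intervalIntegrable _ _)]
    rw [hbd (s, δ) ⟨Set.Ioo_subset_Icc_self hs,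
          ⟨by simp only; linarith, le_rfl⟩⟩ (fun h => lt_irrefl _ h.2.2), hΦ0]
    ring
  have cc : Continuous fun s => G (α s) * (deriv α s).2 :=
    (hG.continuous.comp hcα).mul (continuous_snd.comp hcd)
  have hdper : ∀ s, deriv α (s + L) = deriv α s := by
    intro s
    have h1 : (fun x => α (x + L)) = α := funext hper
    rw [← deriv_comp_add_const, h1]
  have hp : Function.Periodic (fun s => G (α s) * (deriv α s).2) L := fun s => by
    simp only [hper, hdper]
  have i3 : ∫ s in (0 : ℝ)..L, G (α s) * (deriv α s).2 =
      ∫ s in (s₀ - δ)..(s₀ + δ), G (α s) * (deriv α s).2 := by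
    have h1 := hp.intervalIntegral_add_eq 0 (s₀ - δ)
    rw [zero_add] at h1
    rw [h1, ← intervalIntegral.integral_add_adjacent_intervals (cc.intervalIntegrable (s₀ - δ) (s₀ + δ))
      (cc.intervalIntegrable (s₀ + δ) (s₀ - δ + L))]
    have h2 : ∫ s in (s₀ + δ)..(s₀ - δ + L), G (α s) * (deriv α s).2 = 0 := by
      rw [intervalIntegral.integral_of_le (by linarith), integral_Ioc_eq_integral_Ioo]
      apply integral_eq_zero_of_ae
      refine (ae_restrict_iff' measurableSet_Ioo).2 (Filter.Eventually.of_forall ?_)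
      intro s hs
      simp only [Pi.zero_apply]
      rw [hG0 (α s), zero_mul]
      rintro ⟨q, hq, he⟩
      have hq2 := hc.curve q (hQB hq) s he
      have he' : α q.1 = α s := by rw [← he, ← hΦ0, ← hq2]
      obtain ⟨n, hn⟩ := eq_mod hL hper hsimple he'
      have a1 : (n : ℝ) < 0 := by
        by_contra hcc
        push Not at hcc
        nlinarith [hq.1.2, hs.1]
      have a2 : (-1 : ℝ) < n := by
        by_contra hcc
        push Not at hcc
        nlinarith [hq.1.1, hs.2]
      norm_cast at a1 a2
      have a3 : (-1 : ℤ) < n := by exact_mod_cast a2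
      omega
    rw [h2, add_zero]
  rw [step1, step2, integral_sub (hint _ c3) (hint _ c4), i1, i2, i3]
  ring

/-- The local form of Green's formula on an open set `V`. -/
def GreenOn (α : ℝ → ℝ × ℝ) (L : ℝ) (Ω V : Set (ℝ × ℝ)) : Prop :=
  ∀ G : ℝ × ℝ → ℝ, ContDiff ℝ 1 G → HasCompactSupport G → tsupport G ⊆ V →
    ∫ p in Ω, fderiv ℝ G p (1, 0) = ∫ s in (0 : ℝ)..L, G (α s) * (deriv α s).2

lemma fderiv_integrable {G : ℝ × ℝ → ℝ} (hG : ContDiff ℝ 1 G) (hc : HasCompactSupport G) :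
    Integrable (fun p => fderiv ℝ G p (1, 0)) := by
  apply Continuous.integrable_of_hasCompactSupport
  · exact (hG.continuous_fderiv (by norm_num)).clm_apply continuous_const
  · exact hc.fderiv_apply ℝ (1, 0)

lemma integral_fderiv_zero {G : ℝ × ℝ → ℝ} (hG : ContDiff ℝ 1 G) (hc : HasCompactSupport G) :
    ∫ p, fderiv ℝ G p (1, 0) = 0 := by
  have h := integral_mul_fderiv_eq_neg_fderiv_mul_of_integrable (μ := (volume : Measure (ℝ × ℝ)))
    (f := fun _ : ℝ × ℝ => (1 : ℝ)) (g := G) (v := ((1 : ℝ), (0 : ℝ)))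
    (by simp) (by simpa using fderiv_integrable hG hc)
    (by simpa using hG.continuous.integrable_of_hasCompactSupport hc)
    (fun x _ => differentiableAt_const _)
    (fun x _ => hG.differentiable (by norm_num) x)
  simpa using h

lemma green_local {α : ℝ → ℝ × ℝ} {L : ℝ} {Ω : Set (ℝ × ℝ)} (hL : 0 < L) (hα : ContDiff ℝ 1 α)
    (harc : ∀ s, (deriv α s).1 ^ 2 + (deriv α s).2 ^ 2 = 1)
    (hper : ∀ s, α (s + L) = α s)
    (hsimple : Set.InjOn α (Set.Ico 0 L))
    (hΩopen : IsOpen Ω) (hΩbdd : Bornology.IsBounded Ω)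
    (hfr : ∀ p, p ∈ frontier Ω ↔ ∃ s, α s = p)
    (hccw : ∀ s, ∃ ε > 0, ∀ t ∈ Set.Ioo (0 : ℝ) ε,
      α s + t • (-(deriv α s).2, (deriv α s).1) ∈ Ω) (p : ℝ × ℝ) :
    ∃ V, IsOpen V ∧ p ∈ V ∧ GreenOn α L Ω V := by
  by_cases hp1 : p ∈ closure Ω
  swap
  · refine ⟨(closure Ω)ᶜ, isClosed_closure.isOpen_compl, hp1, ?_⟩
    intro G hG hcs hsupp
    have h1 : ∀ s, G (α s) = 0 := fun s => image_eq_zero_of_notMem_tsupport fun h =>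
      hsupp h (frontier_subset_closure ((hfr _).2 ⟨s, rfl⟩))
    have h2 : ∫ p in Ω, fderiv ℝ G p (1, 0) = 0 := by
      apply setIntegral_eq_zero_of_forall_eq_zero
      intro x hx
      rw [image_eq_zero_of_notMem_tsupport (f := fderiv ℝ G) fun h =>
        hsupp (tsupport_fderiv_subset ℝ h) (subset_closure hx)]
      rfl
    rw [h2]
    simp [h1]
  by_cases hp2 : p ∈ Ω
  · refine ⟨Ω, hΩopen, hp2, ?_⟩
    intro G hG hcs hsupp
    have h1 : ∀ s, G (α s) = 0 := fun s => image_eq_zero_of_notMem_tsupport fun h => by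
      have h2 := (hfr (α s)).2 ⟨s, rfl⟩
      rw [hΩopen.frontier_eq] at h2
      exact h2.2 (hsupp h)
    rw [setIntegral_eq_integral_of_forall_compl_eq_zero, integral_fderiv_zero hG hcs]
    · simp [h1]
    · intro x hx
      rw [image_eq_zero_of_notMem_tsupport (f := fderiv ℝ G) fun h =>
        hx (hsupp (tsupport_fderiv_subset ℝ h))]
      rfl
  · obtain ⟨s₀, rfl⟩ := (hfr p).1 (by rw [hΩopen.frontier_eq]; exact ⟨hp1, hp2⟩)
    obtain ⟨δ, hc⟩ := local_chart hL hα harc hper hsimple s₀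
    have hδ := hc.pos
    refine ⟨_, hc.opn (Set.Ioo (s₀ - δ) (s₀ + δ) ×ˢ Set.Ioo (-δ) δ)
      (Set.prod_mono Set.Ioo_subset_Icc_self Set.Ioo_subset_Icc_self) (isOpen_Ioo.prod isOpen_Ioo),
      ⟨(s₀, 0), ⟨⟨by simp only; linarith, by simp only; linarith⟩,
        ⟨by simp only; linarith, by simp only; linarith⟩⟩, by simp [tubeMap]⟩, ?_⟩
    intro G hG _ hsupp
    exact green_chart hL hα hper hsimple hΩopen hfr hc (chart_left hα hΩopen hfr hccw hc)
      (chart_right hL hα harc hper hsimple hΩopen hΩbdd hfr hccw hc) hG hsupp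

lemma exists_cutoff {s t : Set (ℝ × ℝ)} (hs : IsClosed s) (ht : IsClosed t) (hd : Disjoint s t) :
    ∃ f : ℝ × ℝ → ℝ, ContDiff ℝ 1 f ∧ (∀ x ∈ s, f =ᶠ[nhds x] 0) ∧ (∀ x ∈ t, f =ᶠ[nhds x] 1) := by
  obtain ⟨f, h0, h1, -⟩ := exists_contMDiffMap_zero_one_nhds_of_isClosed
    (modelWithCornersSelf ℝ (ℝ × ℝ)) (n := 1) hs ht hd
  refine ⟨f, f.contMDiff.contDiff, fun x hx => ?_, fun x hx => ?_⟩
  · exact Filter.eventually_iff.2 (mem_nhdsSet_iff_forall.1 h0 x hx)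
  · exact Filter.eventually_iff.2 (mem_nhdsSet_iff_forall.1 h1 x hx)

lemma greenOn_union {α : ℝ → ℝ × ℝ} {L : ℝ} {Ω V₁ V₂ : Set (ℝ × ℝ)} (hα : ContDiff ℝ 1 α)
    (ho₁ : IsOpen V₁) (ho₂ : IsOpen V₂)
    (h₁ : GreenOn α L Ω V₁) (h₂ : GreenOn α L Ω V₂) : GreenOn α L Ω (V₁ ∪ V₂) := by
  intro G hG hcs hsupp
  obtain ⟨f, hf, hf0, hf1⟩ := exists_cutoff ho₁.isClosed_compl
    ((isClosed_tsupport G).inter ho₂.isClosed_compl) (by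
      rw [Set.disjoint_left]
      rintro x hx ⟨hx1, hx2⟩
      rcases hsupp hx1 with h | h
      · exact hx h
      · exact hx2 h)
  set G₁ := fun p => f p * G p with hG₁
  set G₂ := fun p => (1 - f p) * G p with hG₂
  have d1 : ContDiff ℝ 1 G₁ := hf.mul hG
  have d2 : ContDiff ℝ 1 G₂ := (contDiff_const.sub hf).mul hG
  have k1 : HasCompactSupport G₁ := hcs.mul_left
  have k2 : HasCompactSupport G₂ := hcs.mul_left
  have t1 : tsupport G₁ ⊆ V₁ := by
    intro x hx
    by_contra hxV
    refine (notMem_tsupport_iff_eventuallyEq.2 ?_) hx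
    filter_upwards [hf0 x hxV] with y hy
    simp [hG₁, hy]
  have t2 : tsupport G₂ ⊆ V₂ := by
    intro x hx
    by_contra hxV
    have hxG : x ∈ tsupport G := tsupport_mul_subset_right hx
    refine (notMem_tsupport_iff_eventuallyEq.2 ?_) hx
    filter_upwards [hf1 x ⟨hxG, hxV⟩] with y hy
    simp [hG₂, hy]
  have e1 := h₁ G₁ d1 k1 t1
  have e2 := h₂ G₂ d2 k2 t2
  have hsum : ∀ p, G p = G₁ p + G₂ p := fun p => by simp only [hG₁, hG₂]; ring
  have hfd : ∀ p, fderiv ℝ G p (1, 0) = fderiv ℝ G₁ p (1, 0) + fderiv ℝ G₂ p (1, 0) := by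
    intro p
    have : G = G₁ + G₂ := funext hsum
    rw [this, fderiv_add (d1.differentiable (by norm_num) p) (d2.differentiable (by norm_num) p)]
    rfl
  have hcd : Continuous (deriv α) := hα.continuous_deriv (by norm_num)
  have hcα := hα.continuous
  have cc : ∀ H : ℝ × ℝ → ℝ, ContDiff ℝ 1 H → Continuous fun s => H (α s) * (deriv α s).2 :=
    fun H hH => (hH.continuous.comp hcα).mul (continuous_snd.comp hcd)
  simp only [hfd]
  rw [integral_add (fderiv_integrable d1 k1).integrableOn (fderiv_integrable d2 k2).integrableOn,
    e1, e2, ← intervalIntegral.integral_add ((cc _ d1).intervalIntegrable _ _)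
      ((cc _ d2).intervalIntegrable _ _)]
  apply intervalIntegral.integral_congr
  intro s _
  simp only [hsum (α s)]
  ring

lemma green_area {α : ℝ → ℝ × ℝ} {L : ℝ} {Ω : Set (ℝ × ℝ)} (hL : 0 < L) (hα : ContDiff ℝ 1 α)
    (harc : ∀ s, (deriv α s).1 ^ 2 + (deriv α s).2 ^ 2 = 1)
    (hper : ∀ s, α (s + L) = α s)
    (hsimple : Set.InjOn α (Set.Ico 0 L))
    (hΩopen : IsOpen Ω) (hΩbdd : Bornology.IsBounded Ω)
    (hfr : ∀ p, p ∈ frontier Ω ↔ ∃ s, α s = p)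
    (hccw : ∀ s, ∃ ε > 0, ∀ t ∈ Set.Ioo (0 : ℝ) ε,
      α s + t • (-(deriv α s).2, (deriv α s).1) ∈ Ω) :
    (volume Ω).toReal = ∫ s in (0 : ℝ)..L, (α s).1 * (deriv α s).2 := by
  obtain ⟨R, hR⟩ := hΩbdd.closure.subset_ball (0 : ℝ × ℝ)
  obtain ⟨V, hVo, hKV, hV⟩ : ∃ V, IsOpen V ∧ Metric.closedBall (0 : ℝ × ℝ) R ⊆ V ∧
      GreenOn α L Ω V := by
    refine IsCompact.induction_on (isCompact_closedBall (0 : ℝ × ℝ) R)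
      (p := fun S => ∃ V, IsOpen V ∧ S ⊆ V ∧ GreenOn α L Ω V) ?_ ?_ ?_ ?_
    · refine ⟨∅, isOpen_empty, Set.empty_subset _, ?_⟩
      intro G hG hcs hsupp
      have : G = 0 := tsupport_eq_empty_iff.1 (Set.subset_empty_iff.1 hsupp)
      subst this
      simp
    · rintro s t hst ⟨V, h1, h2, h3⟩
      exact ⟨V, h1, hst.trans h2, h3⟩
    · rintro s t ⟨V, h1, h2, h3⟩ ⟨W, k1, k2, k3⟩
      exact ⟨V ∪ W, h1.union k1, Set.union_subset_union h2 k2, greenOn_union hα h1 k1 h3 k3⟩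
    · intro x _
      obtain ⟨V, h1, h2, h3⟩ := green_local hL hα harc hper hsimple hΩopen hΩbdd hfr hccw x
      exact ⟨V, mem_nhdsWithin_of_mem_nhds (h1.mem_nhds h2), V, h1, subset_rfl, h3⟩
  obtain ⟨f, hf, hf0, hf1⟩ := exists_cutoff (s := (Metric.ball (0 : ℝ × ℝ) R)ᶜ) (t := closure Ω)
    Metric.isOpen_ball.isClosed_compl isClosed_closure (by
      rw [Set.disjoint_left]
      intro x hx hx'
      exact hx (hR hx'))
  have hts : tsupport (fun p : ℝ × ℝ => f p * p.1) ⊆ Metric.closedBall 0 R := by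
    intro x hx
    by_contra hxV
    refine (notMem_tsupport_iff_eventuallyEq.2 ?_) hx
    filter_upwards [hf0 x (fun h => hxV (Metric.ball_subset_closedBall h))] with y hy
    simp [hy]
  have hGr := hV (fun p => f p * p.1) (hf.mul contDiff_fst)
    (HasCompactSupport.of_support_subset_isCompact (isCompact_closedBall 0 R)
      ((subset_tsupport _).trans hts)) (hts.trans hKV)
  have h1 : ∫ p in Ω, fderiv ℝ (fun p : ℝ × ℝ => f p * p.1) p (1, 0) = ∫ p in Ω, (1 : ℝ) := by
    apply setIntegral_congr_fun hΩopen.measurableSet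
    intro p hp
    have : (fun p : ℝ × ℝ => f p * p.1) =ᶠ[nhds p] Prod.fst := by
      filter_upwards [hf1 p (subset_closure hp)] with y hy
      simp [hy]
    simp only
    rw [this.fderiv_eq, fderiv_fst]
    rfl
  have h2 : ∀ s, f (α s) = 1 := fun s =>
    (hf1 _ (frontier_subset_closure ((hfr _).2 ⟨s, rfl⟩))).eq_of_nhds
  simp only [h2, one_mul] at hGr
  rw [← hGr, h1]
  simp [Measure.real]

/-- Theorem 1 of the paper (main length estimate): if the two stability
inequalities hold for the test tangent components `g₁, g₂`, then
`l ≤ (π/2)√(L/(a·area Ω))`. -/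
theorem main_length_estimate
    (α : ℝ → ℝ × ℝ) (κ : ℝ → ℝ) (L l a : ℝ) (Ω : Set (ℝ × ℝ))
    (hL : 0 < L) (hl : 0 < l) (ha : 0 < a)
    (hsmooth : ContDiff ℝ (⊤ : ℕ∞) α)
    (harc : ∀ s, (deriv α s).1 ^ 2 + (deriv α s).2 ^ 2 = 1)
    (hper : ∀ s, α (s + L) = α s)
    (hsimple : Set.InjOn α (Set.Ico 0 L))
    (hcurv : ∀ s, deriv (deriv α) s = κ s • (-(deriv α s).2, (deriv α s).1))
    (hΩopen : IsOpen Ω) (hΩbdd : Bornology.IsBounded Ω)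
    (hbound : frontier Ω = α '' Set.Ico 0 L)
    (hccw : ∀ s, ∃ ε > 0, ∀ t ∈ Set.Ioo (0 : ℝ) ε,
      α s + t • (-(deriv α s).2, (deriv α s).1) ∈ Ω)
    (g : Fin 2 → ℝ → ℝ)
    (hg₁ : g 0 = fun s => (deriv α s).1)
    (hg₂ : g 1 = fun s => (deriv α s).2)
    (hstab : ∀ i : Fin 2,
      (π ^ 2 / l ^ 2) * (∫ s in (0 : ℝ)..L, g i s ^ 2)
          + (∫ s in (0 : ℝ)..L, (deriv (g i) s) ^ 2)
        ≥ ∫ s in (0 : ℝ)..L,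
            (κ s ^ 2 + 2 * a * ((α s).1 * (deriv α s).2 - (α s).2 * (deriv α s).1))
              * g i s ^ 2) :
    l ≤ (π / 2) * Real.sqrt (L / (a * (volume Ω).toReal)) := by
  have hα : ContDiff ℝ 1 α := hsmooth.of_le (by exact_mod_cast le_top)
  have hα2 : ContDiff ℝ (1 + 1) α := hsmooth.of_le (by
    have h : ((2 : ℕ∞) : WithTop ℕ∞) ≤ ((⊤ : ℕ∞) : WithTop ℕ∞) := WithTop.coe_le_coe.2 le_top
    rw [one_add_one_eq_two]
    exact h)
  have hd1 : ContDiff ℝ 1 (deriv α) := ContDiff.deriv' hα2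
  have hcα : Continuous α := hα.continuous
  have hcd : Continuous (deriv α) := hd1.continuous
  have hfr : ∀ p, p ∈ frontier Ω ↔ ∃ s, α s = p := by
    intro p
    rw [hbound]
    constructor
    · rintro ⟨s, -, h⟩
      exact ⟨s, h⟩
    · rintro ⟨s, h⟩
      have m1 := toIcoMod_mem_Ico hL 0 s
      rw [zero_add] at m1
      exact ⟨_, m1, by rw [← self_sub_toIcoDiv_zsmul hL 0 s, per_int hper, h]⟩
  have hgreen := green_area hL hα harc hper hsimple hΩopen hΩbdd hfr hccw
  have hαd : ∀ s, HasDerivAt α (deriv α s) s := fun s =>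
    ((hα.differentiable (by norm_num)) s).hasDerivAt
  have hx : ∀ s, HasDerivAt (fun s => (α s).1) (deriv α s).1 s := fun s => (hαd s).fst
  have hy : ∀ s, HasDerivAt (fun s => (α s).2) (deriv α s).2 s := fun s => (hαd s).snd
  have hdd : ∀ s, HasDerivAt (deriv α) (deriv (deriv α) s) s := fun s =>
    ((hd1.differentiable (by norm_num)) s).hasDerivAt
  have hg1 : ∀ s, deriv (g 0) s = - κ s * (deriv α s).2 := by
    intro s
    have h1 : HasDerivAt (fun s => (deriv α s).1) (deriv (deriv α) s).1 s := (hdd s).fst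
    rw [hg₁, h1.deriv, hcurv s]
    simp
  have hg2 : ∀ s, deriv (g 1) s = κ s * (deriv α s).1 := by
    intro s
    have h1 : HasDerivAt (fun s => (deriv α s).2) (deriv (deriv α) s).2 s := (hdd s).snd
    rw [hg₂, h1.deriv, hcurv s]
    simp
  have hκ : Continuous κ := by
    have h1 : κ = fun s => (deriv (deriv α) s).2 * (deriv α s).1
        - (deriv (deriv α) s).1 * (deriv α s).2 := by
      funext s
      rw [hcurv s]
      simp only [Prod.smul_mk, smul_eq_mul]
      linear_combination (-κ s) * harc s
    have h2 : Continuous (deriv (deriv α)) := hd1.continuous_deriv (by norm_num)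
    rw [h1]
    fun_prop
  have hparts : ∫ s in (0 : ℝ)..L, ((α s).1 * (deriv α s).2 + (α s).2 * (deriv α s).1) = 0 := by
    have h1 : ∀ s ∈ Set.uIcc 0 L, HasDerivAt (fun s => (α s).1 * (α s).2)
        ((α s).1 * (deriv α s).2 + (α s).2 * (deriv α s).1) s := by
      intro s _
      have h2 := (hx s).mul (hy s)
      rw [show (α s).1 * (deriv α s).2 + (α s).2 * (deriv α s).1 =
        (deriv α s).1 * (α s).2 + (α s).1 * (deriv α s).2 by ring]
      exact h2
    rw [intervalIntegral.integral_eq_sub_of_hasDerivAt h1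
      (Continuous.intervalIntegrable (by fun_prop) _ _)]
    have h2 := hper 0
    rw [zero_add] at h2
    rw [h2]
    ring
  have hform : ∫ s in (0 : ℝ)..L, ((α s).1 * (deriv α s).2 - (α s).2 * (deriv α s).1)
      = 2 * (volume Ω).toReal := by
    have h1 : ∫ s in (0 : ℝ)..L, ((α s).1 * (deriv α s).2 - (α s).2 * (deriv α s).1)
        = ∫ s in (0 : ℝ)..L, (2 * ((α s).1 * (deriv α s).2)
          - ((α s).1 * (deriv α s).2 + (α s).2 * (deriv α s).1)) := by
      congr 1
      funext s
      ring
    rw [h1, intervalIntegral.integral_sub (Continuous.intervalIntegrable (by fun_prop) _ _)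
      (Continuous.intervalIntegrable (by fun_prop) _ _), hparts,
      intervalIntegral.integral_const_mul, hgreen, sub_zero]
  have s0 := hstab 0
  have s1 := hstab 1
  simp only [hg1, hg2] at s0 s1
  simp only [hg₁, hg₂] at s0 s1
  have hi : ∀ f : ℝ → ℝ, Continuous f → IntervalIntegrable f volume 0 L := fun f hf =>
    hf.intervalIntegrable _ _
  have a1 : (∫ s in (0 : ℝ)..L, (deriv α s).1 ^ 2) + ∫ s in (0 : ℝ)..L, (deriv α s).2 ^ 2 = L := by
    rw [← intervalIntegral.integral_add (hi _ (by fun_prop)) (hi _ (by fun_prop))]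
    simp [harc]
  have a2 : (∫ s in (0 : ℝ)..L, (-κ s * (deriv α s).2) ^ 2) +
      ∫ s in (0 : ℝ)..L, (κ s * (deriv α s).1) ^ 2 = ∫ s in (0 : ℝ)..L, κ s ^ 2 := by
    rw [← intervalIntegral.integral_add (hi _ (by fun_prop)) (hi _ (by fun_prop))]
    congr 1
    funext s
    linear_combination (κ s ^ 2) * harc s
  have a3 : (∫ s in (0 : ℝ)..L,
            (κ s ^ 2 + 2 * a * ((α s).1 * (deriv α s).2 - (α s).2 * (deriv α s).1))
              * (deriv α s).1 ^ 2) + (∫ s in (0 : ℝ)..L,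
            (κ s ^ 2 + 2 * a * ((α s).1 * (deriv α s).2 - (α s).2 * (deriv α s).1))
              * (deriv α s).2 ^ 2) = (∫ s in (0 : ℝ)..L, κ s ^ 2) +
              2 * a * (2 * (volume Ω).toReal) := by
    rw [← hform, ← intervalIntegral.integral_const_mul,
      ← intervalIntegral.integral_add (hi _ (by fun_prop)) (hi _ (by fun_prop)),
      ← intervalIntegral.integral_add (hi _ (by fun_prop)) (hi _ (by fun_prop))]
    congr 1
    funext s
    linear_combination (κ s ^ 2 + 2 * a * ((α s).1 * (deriv α s).2 - (α s).2 * (deriv α s).1))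
      * harc s
  have hmain : 4 * a * (volume Ω).toReal ≤ π ^ 2 / l ^ 2 * L := by
    have := mul_add (π ^ 2 / l ^ 2) (∫ s in (0 : ℝ)..L, (deriv α s).1 ^ 2)
      (∫ s in (0 : ℝ)..L, (deriv α s).2 ^ 2)
    rw [a1] at this
    linarith
  have hvol : 0 < (volume Ω).toReal := by
    apply ENNReal.toReal_pos
    · obtain ⟨ε, hε, h⟩ := hccw 0
      exact (hΩopen.measure_pos volume ⟨_, h (ε / 2) ⟨by linarith, by linarith⟩⟩).ne'
    · exact hΩbdd.measure_lt_top.ne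
  set A := (volume Ω).toReal
  have haA : 0 < a * A := mul_pos ha hvol
  have hl2 : (2 * l / π) ^ 2 ≤ L / (a * A) := by
    rw [le_div_iff₀ haA]
    have h1 : π ^ 2 / l ^ 2 * L * (l ^ 2 / π ^ 2) = L := by
      field_simp
    have h2 : 0 ≤ l ^ 2 / π ^ 2 := by positivity
    calc (2 * l / π) ^ 2 * (a * A) = 4 * a * A * (l ^ 2 / π ^ 2) := by ring
      _ ≤ π ^ 2 / l ^ 2 * L * (l ^ 2 / π ^ 2) := mul_le_mul_of_nonneg_right hmain h2
      _ = L := h1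
  have h3 := Real.le_sqrt_of_sq_le hl2
  calc l = π / 2 * (2 * l / π) := by field_simp
    _ ≤ _ := mul_le_mul_of_nonneg_left h3 (by positivity)
end

section
/- Let a > 0, and let α be a smooth simple closed counterclockwise curve of length L enclosing area A > 0, parametrized by arc length, with curvature κ(s) = a|α(s)|² + b for some b ∈ ℝ. If l > (π/2)·√(L/(aA)), then there exists a smooth function u(t,s) = f(t)g(s) on [0,l] × [0,L] with f(0) = f(l) = 0, g L-periodic, ∫₀ᴸ g ds = 0, such that Φ(u) = −∫∫ u·(Δ₀u + (κ² + 2a(α₁α₂' − α₂α₁'))u) dt ds < 0. -/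
open MeasureTheory Real intervalIntegral

/-- A unit speed closed curve `(x, y)` with tangent `(u, v)`, bounding `Ω` on its left. -/
structure CurveData (x y u v κ : ℝ → ℝ) (L : ℝ) (Ω : Set (ℝ × ℝ)) : Prop where
  hL : 0 < L
  cx : ContDiff ℝ (⊤ : ℕ∞) x
  cy : ContDiff ℝ (⊤ : ℕ∞) y
  cu : ContDiff ℝ (⊤ : ℕ∞) u
  cv : ContDiff ℝ (⊤ : ℕ∞) v
  cκ : ContDiff ℝ (⊤ : ℕ∞) κ
  hx : ∀ s, HasDerivAt x (u s) s
  hy : ∀ s, HasDerivAt y (v s) s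
  hu : ∀ s, HasDerivAt u (-(κ s * v s)) s
  hv : ∀ s, HasDerivAt v (κ s * u s) s
  huv : ∀ s, u s ^ 2 + v s ^ 2 = 1
  perx : ∀ s, x (s + L) = x s
  pery : ∀ s, y (s + L) = y s
  perv : ∀ s, v (s + L) = v s
  inj : ∀ c, ∀ s ∈ Set.Ico c (c + L), ∀ t ∈ Set.Ico c (c + L), x s = x t → y s = y t → s = t
  op : IsOpen Ω
  bdd : Bornology.IsBounded Ω
  fr : frontier Ω = Set.range (fun s => (x s, y s))
  ccw : ∀ s, ∃ ε > 0, ∀ t ∈ Set.Ioo (0 : ℝ) ε, (x s - t * v s, y s + t * u s) ∈ Ω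

/-- Fermi coordinates around the curve. -/
def fermi (x y u v : ℝ → ℝ) (q : ℝ × ℝ) : ℝ × ℝ :=
  (x q.1 - q.2 * v q.1, y q.1 + q.2 * u q.1)

/-- The derivative of Fermi coordinates. -/
noncomputable def fermiD (u v κ : ℝ → ℝ) (q : ℝ × ℝ) : ℝ × ℝ →L[ℝ] ℝ × ℝ :=
  (((1 - q.2 * κ q.1) * u q.1) • ContinuousLinearMap.fst ℝ ℝ ℝ
      + (-v q.1) • ContinuousLinearMap.snd ℝ ℝ ℝ).prod
  (((1 - q.2 * κ q.1) * v q.1) • ContinuousLinearMap.fst ℝ ℝ ℝ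
      + (u q.1) • ContinuousLinearMap.snd ℝ ℝ ℝ)

lemma det_aux (a b c d : ℝ) : ((a • ContinuousLinearMap.fst ℝ ℝ ℝ
      + b • ContinuousLinearMap.snd ℝ ℝ ℝ).prod
  (c • ContinuousLinearMap.fst ℝ ℝ ℝ
      + d • ContinuousLinearMap.snd ℝ ℝ ℝ)).det = a * d - b * c := by
  rw [ContinuousLinearMap.det, ← LinearMap.det_toMatrix (Module.Basis.finTwoProd ℝ),
    Matrix.det_fin_two]
  simp [LinearMap.toMatrix_apply]

/-- A good box around the boundary point of parameter `s0`. -/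
structure IsBox (x y u v κ : ℝ → ℝ) (L s0 δ c : ℝ) : Prop where
  pos : 0 < δ
  c1 : c ≤ s0 - δ
  c2 : s0 + δ < c + L
  inj : Set.InjOn (fermi x y u v) (Set.Icc (s0 - δ) (s0 + δ) ×ˢ Set.Icc (-δ) δ)
  jac : ∀ q ∈ (Set.Icc (s0 - δ) (s0 + δ) ×ˢ Set.Icc (-δ) δ), 0 < 1 - q.2 * κ q.1
  op : IsOpen (fermi x y u v '' (Set.Ioo (s0 - δ) (s0 + δ) ×ˢ Set.Ioo (-δ) δ))
  uniq : ∀ s ∈ Set.Ico c (c + L), ∀ q ∈ (Set.Icc (s0 - δ) (s0 + δ) ×ˢ Set.Icc (-δ) δ),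
      fermi x y u v q = (x s, y s) → q = (s, 0)

namespace CurveData
variable {x y u v κ : ℝ → ℝ} {L : ℝ} {Ω : Set (ℝ × ℝ)}

lemma fermi_cont (h : CurveData x y u v κ L Ω) : ContDiff ℝ (⊤ : ℕ∞) (fermi x y u v) := by
  have := h.cx; have := h.cy; have := h.cu; have := h.cv
  unfold fermi
  fun_prop

lemma fermi_deriv (h : CurveData x y u v κ L Ω) (q : ℝ × ℝ) :
    HasFDerivAt (fermi x y u v) (fermiD u v κ q) q := by
  have e1 : HasFDerivAt (fun q : ℝ × ℝ => q.1) (ContinuousLinearMap.fst ℝ ℝ ℝ) q := hasFDerivAt_fst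
  have e2 : HasFDerivAt (fun q : ℝ × ℝ => q.2) (ContinuousLinearMap.snd ℝ ℝ ℝ) q := hasFDerivAt_snd
  have hx := (h.hx q.1).comp_hasFDerivAt q e1
  have hy := (h.hy q.1).comp_hasFDerivAt q e1
  have hu := (h.hu q.1).comp_hasFDerivAt q e1
  have hv := (h.hv q.1).comp_hasFDerivAt q e1
  have := (hx.sub (e2.mul hv)).prodMk (hy.add (e2.mul hu))
  refine this.congr_fderiv ?_
  ext <;> simp [fermiD] <;> ring

lemma fermi_det (h : CurveData x y u v κ L Ω) (q : ℝ × ℝ) :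
    (fermiD u v κ q).det = 1 - q.2 * κ q.1 := by
  have := det_aux ((1 - q.2 * κ q.1) * u q.1) (-v q.1) ((1 - q.2 * κ q.1) * v q.1) (u q.1)
  rw [fermiD, this]
  linear_combination (1 - q.2 * κ q.1) * h.huv q.1

/-- Existence of a good box around each boundary point. -/
lemma box (h : CurveData x y u v κ L Ω) (s0 : ℝ) : ∃ δ c, IsBox x y u v κ L s0 δ c := by
  have hd := (h.fermi_cont.contDiffAt (x := (s0, 0))).hasStrictFDerivAt'
    (h.fermi_deriv (s0, 0)) (by simp)
  have hdet : (fermiD u v κ (s0, 0)).det ≠ 0 := by rw [h.fermi_det]; simp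
  rw [← ContinuousLinearMap.coe_toContinuousLinearEquivOfDetNeZero _ hdet] at hd
  set e := hd.toOpenPartialHomeomorph (fermi x y u v) with he
  have hecoe : (e : ℝ × ℝ → ℝ × ℝ) = fermi x y u v := hd.toOpenPartialHomeomorph_coe
  have hmem : (s0, (0 : ℝ)) ∈ e.source := hd.mem_toOpenPartialHomeomorph_source
  have boxes : ∀ V ∈ nhds (s0, (0 : ℝ)), ∃ δ > 0,
      Set.Icc (s0 - δ) (s0 + δ) ×ˢ Set.Icc (-δ) δ ⊆ V := by
    intro V hV
    obtain ⟨δ, hδ, hs⟩ := Metric.nhds_basis_closedBall.mem_iff.1 hV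
    refine ⟨δ, hδ, ?_⟩
    rw [← closedBall_prod_same, Real.closedBall_eq_Icc, Real.closedBall_eq_Icc] at hs
    simpa using hs
  have cκ := h.cκ.continuous
  have hJ : {q : ℝ × ℝ | 0 < 1 - q.2 * κ q.1} ∈ nhds (s0, (0 : ℝ)) :=
    (isOpen_lt continuous_const (by fun_prop)).mem_nhds (by simp)
  obtain ⟨δ1, hδ1, hb1⟩ := boxes _ (Filter.inter_mem (e.open_source.mem_nhds hmem) hJ)
  set δ2 := min δ1 (L / 3) with hδ2
  have hL := h.hL
  have h2pos : 0 < δ2 := lt_min hδ1 (by linarith)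
  have h2le : δ2 ≤ L / 3 := min_le_right _ _
  have h21 : δ2 ≤ δ1 := min_le_left _ _
  set C := (fun s => (x s, y s)) '' Set.Icc (s0 + δ2) (s0 + L - δ2) with hC
  have hCc : IsCompact C := isCompact_Icc.image (by
    have := h.cx.continuous; have := h.cy.continuous; fun_prop)
  have hCn : fermi x y u v (s0, 0) ∉ C := by
    rintro ⟨s, hs, hs'⟩
    simp only [fermi, Prod.mk.injEq] at hs'
    have := h.inj s0 s ⟨by linarith [hs.1], by linarith [hs.2]⟩ s0 ⟨le_rfl, by linarith⟩
      (by linarith [hs'.1]) (by linarith [hs'.2])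
    linarith [hs.1]
  have hCnh : (fermi x y u v) ⁻¹' Cᶜ ∈ nhds (s0, (0 : ℝ)) :=
    (hCc.isClosed.isOpen_compl.preimage h.fermi_cont.continuous).mem_nhds hCn
  obtain ⟨δ3, hδ3, hb3⟩ := boxes _ hCnh
  set δ := min δ2 δ3 with hδ
  have hpos : 0 < δ := lt_min h2pos hδ3
  have hd2 : δ ≤ δ2 := min_le_left _ _
  have hd3 : δ ≤ δ3 := min_le_right _ _
  have sub : ∀ d, δ ≤ d → Set.Icc (s0 - δ) (s0 + δ) ×ˢ Set.Icc (-δ) δ ⊆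
      Set.Icc (s0 - d) (s0 + d) ×ˢ Set.Icc (-d) d := fun d hd =>
    Set.prod_mono (Set.Icc_subset_Icc (by linarith) (by linarith))
      (Set.Icc_subset_Icc (by linarith) (by linarith))
  have sub1 := (sub δ1 (by linarith)).trans hb1
  have sub3 := (sub δ3 hd3).trans hb3
  refine ⟨δ, s0 - δ2, hpos, by linarith, by linarith, ?_, fun q hq => (sub1 hq).2, ?_, ?_⟩
  · rw [← hecoe]
    exact e.injOn.mono fun q hq => (sub1 hq).1
  · rw [← hecoe]
    refine e.isOpen_image_of_subset_source (isOpen_Ioo.prod isOpen_Ioo) ?_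
    exact fun q hq => (sub1 (Set.prod_mono Set.Ioo_subset_Icc_self Set.Ioo_subset_Icc_self hq)).1
  · intro s hs q hq hqs
    have hns : (x s, y s) ∉ C := by
      rw [← hqs]; exact sub3 hq
    have hs2 : s < s0 + δ2 := by
      by_contra hcon
      exact hns ⟨s, ⟨by linarith, by linarith [hs.2]⟩, rfl⟩
    have hsm : (s, (0 : ℝ)) ∈ e.source := by
      refine (hb1 ⟨⟨?_, ?_⟩, ?_, ?_⟩).1 <;> simp <;> linarith [hs.1]
    refine e.injOn (sub1 hq).1 hsm ?_
    rw [hecoe, hqs]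
    simp [fermi]

lemma per_mem (h : CurveData x y u v κ L Ω) (c s : ℝ) :
    ∃ s' ∈ Set.Ico c (c + L), (x s', y s') = (x s, y s) := by
  have hp : Function.Periodic (fun s => (x s, y s)) L := fun s => by simp [h.perx, h.pery]
  obtain ⟨s', hs', e⟩ := hp.exists_mem_Ico h.hL s c
  exact ⟨s', hs', e.symm⟩

lemma fermi_zero (s : ℝ) : fermi x y u v (s, 0) = (x s, y s) := by simp [fermi]

lemma not_mem_curve (h : CurveData x y u v κ L Ω) (s : ℝ) : (x s, y s) ∉ Ω := by
  intro hm
  have : (x s, y s) ∈ frontier Ω := by rw [h.fr]; exact ⟨s, rfl⟩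
  rw [h.op.frontier_eq] at this
  exact this.2 hm

variable {s0 δ c : ℝ}

lemma box_frontier (h : CurveData x y u v κ L Ω) (hb : IsBox x y u v κ L s0 δ c) {q : ℝ × ℝ}
    (hq : q ∈ Set.Icc (s0 - δ) (s0 + δ) ×ˢ Set.Icc (-δ) δ)
    (hf : fermi x y u v q ∈ frontier Ω) : q.2 = 0 := by
  rw [h.fr] at hf
  obtain ⟨s, hs⟩ := hf
  obtain ⟨s', hs', e⟩ := h.per_mem c s
  have := hb.uniq s' hs' q hq (by rw [e, ← hs])
  rw [this]

lemma side (h : CurveData x y u v κ L Ω) (hb : IsBox x y u v κ L s0 δ c) {S : Set (ℝ × ℝ)}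
    (hS : S ⊆ Set.Icc (s0 - δ) (s0 + δ) ×ˢ Set.Icc (-δ) δ) (hc : Convex ℝ S)
    (h0 : ∀ q ∈ S, q.2 ≠ 0) {q q' : ℝ × ℝ} (hq : q ∈ S) (hqΩ : fermi x y u v q ∈ Ω)
    (hq' : q' ∈ S) : fermi x y u v q' ∈ Ω := by
  by_contra hcon
  have hp : IsPreconnected (fermi x y u v '' S) :=
    hc.isPreconnected.image _ h.fermi_cont.continuous.continuousOn
  have key : ∀ w ∈ S, fermi x y u v w ∉ Ω → fermi x y u v w ∉ closure Ω := by
    intro w hw hn hcl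
    refine h0 w hw (h.box_frontier hb (hS hw) ?_)
    rw [h.op.frontier_eq]
    exact ⟨hcl, hn⟩
  obtain ⟨z, -, hz1, hz2⟩ := hp Ω (closure Ω)ᶜ h.op isClosed_closure.isOpen_compl
    (by
      rintro _ ⟨w, hw, rfl⟩
      by_cases hwΩ : fermi x y u v w ∈ Ω
      · exact Or.inl hwΩ
      · exact Or.inr (key w hw hwΩ))
    ⟨_, ⟨q, hq, rfl⟩, hqΩ⟩ ⟨_, ⟨q', hq', rfl⟩, key q' hq' hcon⟩
  exact hz2 (subset_closure hz1)

lemma side_plus (h : CurveData x y u v κ L Ω) (hb : IsBox x y u v κ L s0 δ c) {q : ℝ × ℝ}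
    (hq : q ∈ Set.Ioo (s0 - δ) (s0 + δ) ×ˢ Set.Ioo 0 δ) : fermi x y u v q ∈ Ω := by
  have hpos := hb.pos
  obtain ⟨ε, hε, hm⟩ := h.ccw s0
  have hmin : 0 < min ε δ := lt_min hε hpos
  have h1 : min ε δ ≤ ε := min_le_left _ _
  have h2 : min ε δ ≤ δ := min_le_right _ _
  refine h.side hb (S := Set.Ioo (s0 - δ) (s0 + δ) ×ˢ Set.Ioo 0 δ) (q := (s0, min ε δ / 2))
    ?_ ((convex_Ioo _ _).prod (convex_Ioo _ _)) (fun q hq => hq.2.1.ne') ?_ ?_ hq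
  · exact Set.prod_mono Set.Ioo_subset_Icc_self
      (Set.Ioo_subset_Icc_self.trans (Set.Icc_subset_Icc (by linarith) le_rfl))
  · refine ⟨⟨?_, ?_⟩, ?_, ?_⟩ <;> simp only <;> linarith
  · exact hm _ ⟨by linarith, by linarith⟩

/-- The closure of `Ω` has no interior points on the curve. -/
lemma not_interior (h : CurveData x y u v κ L Ω) (s : ℝ) :
    (x s, y s) ∉ interior (closure Ω) := by
  have cp : Continuous (fun s => (x s, y s)) := by
    have := h.cx.continuous; have := h.cy.continuous; fun_prop
  have hcl : closure Ω = Ω ∪ Set.range (fun s => (x s, y s)) := by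
    rw [← h.fr, closure_eq_self_union_frontier]
  set S := {s | (x s, y s) ∈ interior (closure Ω)} with hS
  have hSo : IsOpen S := isOpen_interior.preimage cp
  have hSc : IsClosed S := by
    rw [← isOpen_compl_iff, isOpen_iff_mem_nhds]
    intro s0 hs0
    obtain ⟨δ, c, hb⟩ := h.box s0
    have hpos := hb.pos
    set M := Set.Ioo (s0 - δ) (s0 + δ) ×ˢ Set.Ioo (-δ) 0 with hM
    have hMK : M ⊆ Set.Icc (s0 - δ) (s0 + δ) ×ˢ Set.Icc (-δ) δ :=
      Set.prod_mono Set.Ioo_subset_Icc_self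
        (Set.Ioo_subset_Icc_self.trans (Set.Icc_subset_Icc le_rfl (by linarith)))
    have hMd : ∀ q ∈ M, fermi x y u v q ∉ Ω := by
      intro q hq hqΩ
      apply hs0
      rw [hS, Set.mem_ofPred_eq, mem_interior]
      refine ⟨_, ?_, hb.op, ⟨(s0, 0), ⟨⟨?_, ?_⟩, ?_, ?_⟩, fermi_zero s0⟩⟩
      · rintro _ ⟨w, hw, rfl⟩
        rw [hcl]
        rcases lt_trichotomy w.2 0 with h1 | h1 | h1
        · left
          exact h.side hb hMK ((convex_Ioo _ _).prod (convex_Ioo _ _)) (fun q hq => hq.2.2.ne)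
            hq hqΩ ⟨hw.1, hw.2.1, h1⟩
        · right
          exact ⟨w.1, by simp [fermi, h1]⟩
        · left
          exact h.side_plus hb ⟨hw.1, h1, hw.2.2⟩
      all_goals simp [hpos]
    refine Filter.mem_of_superset (Ioo_mem_nhds (a := s0 - δ) (b := s0 + δ) (by linarith)
      (by linarith)) ?_
    intro s hs hsS
    have hn : (fermi x y u v) ⁻¹' (interior (closure Ω)) ∈ nhds (s, (0 : ℝ)) := by
      refine (isOpen_interior.preimage h.fermi_cont.continuous).mem_nhds ?_
      rw [Set.mem_preimage, fermi_zero]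
      exact hsS
    have hcont : Continuous (fun r : ℝ => (s, r)) := by fun_prop
    have hn2 : ∀ᶠ r in nhds (0 : ℝ), fermi x y u v (s, r) ∈ interior (closure Ω) :=
      hcont.continuousAt.eventually hn
    have hn3 : ∀ᶠ r in nhdsWithin (0 : ℝ) (Set.Iio 0), r ∈ Set.Ioo (-δ) 0 :=
      Ioo_mem_nhdsLT (by linarith)
    obtain ⟨r, hr1, hr2⟩ := ((hn2.filter_mono nhdsWithin_le_nhds).and hn3).exists
    have hrM : (s, r) ∈ M := ⟨hs, hr2⟩
    have := interior_subset hr1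
    rw [hcl, ← h.fr] at this
    rcases this with h1 | h1
    · exact hMd _ hrM h1
    · exact hr2.2.ne (h.box_frontier hb (hMK hrM) h1)
  intro hs
  have hu : S = Set.univ := (isClopen_iff.1 ⟨hSc, hSo⟩).resolve_left
    (Set.Nonempty.ne_empty ⟨s, hs⟩)
  have hopen : IsOpen (closure Ω) := by
    rw [← subset_interior_iff_isOpen]
    conv_lhs => rw [hcl]
    rintro q (hq | ⟨s, rfl⟩)
    · exact interior_maximal subset_closure h.op hq
    · have : s ∈ S := by rw [hu]; trivial
      exact this
  have huniv : closure Ω = Set.univ := (isClopen_iff.1 ⟨isClosed_closure, hopen⟩).resolve_left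
    (Set.Nonempty.ne_empty ⟨_, interior_subset hs⟩)
  have hcomp : IsCompact (closure Ω) := h.bdd.isCompact_closure
  rw [huniv] at hcomp
  exact noncompact_univ _ hcomp

lemma side_minus (h : CurveData x y u v κ L Ω) (hb : IsBox x y u v κ L s0 δ c) {q : ℝ × ℝ}
    (hq : q ∈ Set.Ioo (s0 - δ) (s0 + δ) ×ˢ Set.Ioo (-δ) 0) : fermi x y u v q ∉ Ω := by
  intro hqΩ
  have hpos := hb.pos
  have hcl : closure Ω = Ω ∪ Set.range (fun s => (x s, y s)) := by
    rw [← h.fr, closure_eq_self_union_frontier]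
  apply h.not_interior s0
  rw [mem_interior]
  refine ⟨_, ?_, hb.op, ⟨(s0, 0), ⟨⟨?_, ?_⟩, ?_, ?_⟩, fermi_zero s0⟩⟩
  · rintro _ ⟨w, hw, rfl⟩
    rw [hcl]
    rcases lt_trichotomy w.2 0 with h1 | h1 | h1
    · left
      exact h.side hb (Set.prod_mono Set.Ioo_subset_Icc_self
          (Set.Ioo_subset_Icc_self.trans (Set.Icc_subset_Icc le_rfl (by linarith))))
        ((convex_Ioo _ _).prod (convex_Ioo _ _)) (fun q hq => hq.2.2.ne)
        hq hqΩ ⟨hw.1, hw.2.1, h1⟩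
    · right
      exact ⟨w.1, by simp [fermi, h1]⟩
    · left
      exact h.side_plus hb ⟨hw.1, h1, hw.2.2⟩
  all_goals simp [hpos]

lemma omega_inter (h : CurveData x y u v κ L Ω) (hb : IsBox x y u v κ L s0 δ c) :
    Ω ∩ fermi x y u v '' (Set.Ioo (s0 - δ) (s0 + δ) ×ˢ Set.Ioo (-δ) δ) =
      fermi x y u v '' (Set.Ioo (s0 - δ) (s0 + δ) ×ˢ Set.Ioo 0 δ) := by
  have hpos := hb.pos
  ext z
  constructor
  · rintro ⟨hz, w, hw, rfl⟩
    rcases lt_trichotomy w.2 0 with h1 | h1 | h1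
    · exact absurd hz (h.side_minus hb ⟨hw.1, hw.2.1, h1⟩)
    · exfalso
      apply h.not_mem_curve w.1
      rw [← fermi_zero (u := u) (v := v), ← h1]
      exact hz
    · exact ⟨w, ⟨hw.1, h1, hw.2.2⟩, rfl⟩
  · rintro ⟨w, hw, rfl⟩
    exact ⟨h.side_plus hb hw, w, ⟨hw.1, by linarith [hw.2.1], hw.2.2⟩, rfl⟩

lemma clm_apply (A : ℝ × ℝ →L[ℝ] ℝ) (a b : ℝ) : A (a, b) = a * A (1, 0) + b * A (0, 1) := by
  have : ((a, b) : ℝ × ℝ) = a • ((1, 0) : ℝ × ℝ) + b • ((0, 1) : ℝ × ℝ) := by simp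
  rw [this, map_add, map_smul, map_smul, smul_eq_mul, smul_eq_mul]

lemma local_green (h : CurveData x y u v κ L Ω) (hb : IsBox x y u v κ L s0 δ c)
    (φ : ℝ × ℝ → ℝ) (hφ : ContDiff ℝ (⊤ : ℕ∞) φ)
    (hsupp : tsupport φ ⊆ fermi x y u v '' (Set.Ioo (s0 - δ) (s0 + δ) ×ˢ Set.Ioo (-δ) δ)) :
    ∫ z in Ω, fderiv ℝ φ z (1, 0) = ∫ s in (0 : ℝ)..L, φ (x s, y s) * v s := by
  have hpos := hb.pos
  set F := fermi x y u v with hF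
  set U := F '' (Set.Ioo (s0 - δ) (s0 + δ) ×ˢ Set.Ioo (-δ) δ) with hU
  have cx := h.cx.continuous
  have cy := h.cy.continuous
  have cu := h.cu.continuous
  have cv := h.cv.continuous
  have cκ := h.cκ.continuous
  have cφ := hφ.continuous
  have cF : Continuous F := h.fermi_cont.continuous
  have cdφ : Continuous (fderiv ℝ φ) := hφ.continuous_fderiv (by simp)
  have hzero : ∀ z ∉ U, φ z = 0 := fun z hz => image_eq_zero_of_notMem_tsupport fun hm => hz (hsupp hm)
  have hbd : ∀ q ∈ Set.Icc (s0 - δ) (s0 + δ) ×ˢ Set.Icc (-δ) δ,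
      q ∉ Set.Ioo (s0 - δ) (s0 + δ) ×ˢ Set.Ioo (-δ) δ → φ (F q) = 0 := by
    intro q hq hqn
    apply hzero
    rintro ⟨w, hw, hwq⟩
    have := hb.inj (Set.prod_mono Set.Ioo_subset_Icc_self Set.Ioo_subset_Icc_self hw) hq hwq
    exact hqn (this ▸ hw)
  have step1 : ∫ z in Ω, fderiv ℝ φ z (1, 0) = ∫ z in Ω ∩ U, fderiv ℝ φ z (1, 0) := by
    refine setIntegral_eq_of_subset_of_forall_sdiff_eq_zero h.op.measurableSet
      Set.inter_subset_left ?_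
    intro z hz
    have : z ∉ Function.support (fderiv ℝ φ) := fun hm =>
      hz.2 ⟨hz.1, hsupp (support_fderiv_subset ℝ hm)⟩
    rw [Function.notMem_support.1 this]
    rfl
  set G : ℝ × ℝ → ℝ := fun q => (1 - q.2 * κ q.1) * fderiv ℝ φ (F q) (1, 0) with hG
  have cG : Continuous G := by
    have : Continuous fun q => fderiv ℝ φ (F q) (1, 0) := (cdφ.comp cF).clm_apply continuous_const
    fun_prop
  have step2 : ∫ z in Ω ∩ U, fderiv ℝ φ z (1, 0) =
      ∫ q in Set.Icc (s0 - δ, (0 : ℝ)) (s0 + δ, δ), G q := by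
    rw [hU, hF, h.omega_inter hb]
    rw [integral_image_eq_integral_abs_det_fderiv_smul volume
      (isOpen_Ioo.prod isOpen_Ioo).measurableSet
      (fun q _ => (h.fermi_deriv q).hasFDerivWithinAt)
      (hb.inj.mono (Set.prod_mono Set.Ioo_subset_Icc_self
          (Set.Ioo_subset_Icc_self.trans (Set.Icc_subset_Icc (by linarith) le_rfl))))]
    have hae : (Set.Ioo (s0 - δ) (s0 + δ) ×ˢ Set.Ioo 0 δ : Set (ℝ × ℝ)) =ᵐ[volume]
        (Set.Icc (s0 - δ, (0 : ℝ)) (s0 + δ, δ)) := by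
      rw [← Set.Icc_prod_Icc]
      exact Measure.set_prod_ae_eq Ioo_ae_eq_Icc Ioo_ae_eq_Icc
    rw [← setIntegral_congr_set hae]
    refine setIntegral_congr_fun (isOpen_Ioo.prod isOpen_Ioo).measurableSet ?_
    intro q hq
    have hJ := hb.jac q ((Set.prod_mono Set.Ioo_subset_Icc_self
          (Set.Ioo_subset_Icc_self.trans (Set.Icc_subset_Icc (by linarith) le_rfl))) hq)
    simp only [h.fermi_det, abs_of_pos hJ, smul_eq_mul, hG, hF]
  have e1 : ∀ q, HasFDerivAt (fun q : ℝ × ℝ => q.1) (ContinuousLinearMap.fst ℝ ℝ ℝ) q :=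
    fun q => hasFDerivAt_fst
  have e2 : ∀ q, HasFDerivAt (fun q : ℝ × ℝ => q.2) (ContinuousLinearMap.snd ℝ ℝ ℝ) q :=
    fun q => hasFDerivAt_snd
  have hΦ : ∀ q, HasFDerivAt (fun q => φ (F q)) ((fderiv ℝ φ (F q)).comp (fermiD u v κ q)) q :=
    fun q => ((hφ.differentiable (by simp)) (F q)).hasFDerivAt.comp q (h.fermi_deriv q)
  have hdf := fun q => (hΦ q).mul ((h.hu q.1).comp_hasFDerivAt q (e1 q))
  have hdκ : ∀ s, HasDerivAt κ (deriv κ s) s := fun s =>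
    ((h.cκ.differentiable (by simp)) s).hasDerivAt
  have hdg := fun q => (((hΦ q).mul (((e2 q).mul ((hdκ q.1).comp_hasFDerivAt q (e1 q))).const_sub 1)).mul
    ((h.hv q.1).comp_hasFDerivAt q (e1 q))).neg
  have hGeq : ∀ q, G q = _ + _ := fun q => by
    have hd : ∀ w : ℝ × ℝ, fermiD u v κ q w = ((1 - q.2 * κ q.1) * u q.1 * w.1 + (-v q.1) * w.2,
        (1 - q.2 * κ q.1) * v q.1 * w.1 + u q.1 * w.2) := fun w => by simp [fermiD]
    have hP : G q = ((φ (F q)) • ((-(κ q.1 * v q.1)) • ContinuousLinearMap.fst ℝ ℝ ℝ) +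
        (u q.1) • ((fderiv ℝ φ (F q)).comp (fermiD u v κ q))) (1, 0) +
        (-(φ (F q) * (1 - q.2 * κ q.1)) • ((κ q.1 * u q.1) • ContinuousLinearMap.fst ℝ ℝ ℝ)
          - (v q.1) • (φ (F q) • (-(q.2 • (deriv κ q.1 • ContinuousLinearMap.fst ℝ ℝ ℝ) +
            κ q.1 • ContinuousLinearMap.snd ℝ ℝ ℝ)) + (1 - q.2 * κ q.1) •
              ((fderiv ℝ φ (F q)).comp (fermiD u v κ q)))) (0, 1) := by
      simp [hd, hG]
      rw [clm_apply _ ((1 - q.2 * κ q.1) * u q.1), clm_apply _ (-v q.1)]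
      linear_combination (-(1 - q.2 * κ q.1) * fderiv ℝ φ (F q) (1, 0)) * h.huv q.1
    exact hP
  have key := integral_divergence_prod_Icc_of_hasFDerivAt_of_le
    (fun q => φ (F q) * u q.1) (fun q => -(φ (F q) * (1 - q.2 * κ q.1) * v q.1))
    (fun q => ((φ (F q)) • ((-(κ q.1 * v q.1)) • ContinuousLinearMap.fst ℝ ℝ ℝ) +
        (u q.1) • ((fderiv ℝ φ (F q)).comp (fermiD u v κ q))))
    (fun q => (-(φ (F q) * (1 - q.2 * κ q.1)) • ((κ q.1 * u q.1) • ContinuousLinearMap.fst ℝ ℝ ℝ)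
          - (v q.1) • (φ (F q) • (-(q.2 • (deriv κ q.1 • ContinuousLinearMap.fst ℝ ℝ ℝ) +
            κ q.1 • ContinuousLinearMap.snd ℝ ℝ ℝ)) + (1 - q.2 * κ q.1) •
              ((fderiv ℝ φ (F q)).comp (fermiD u v κ q)))))
    (s0 - δ, (0 : ℝ)) (s0 + δ, δ) ⟨by simp; linarith, hpos.le⟩
    (fun q _ => (hdf q).continuousAt.continuousWithinAt)
    (fun q _ => (hdg q).continuousAt.continuousWithinAt)
    (fun q _ => hdf q) (fun q _ => (hdg q).congr_fderiv (by
      ext <;> simp <;> ring))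
    (by
      simp only [← hGeq]
      exact cG.continuousOn.integrableOn_compact isCompact_Icc)
  simp only [← hGeq] at key
  have b1 : ∫ s in (s0 - δ)..(s0 + δ), -(φ (F (s, δ)) * (1 - δ * κ s) * v s) = 0 := by
    rw [integral_congr (g := fun _ => 0), intervalIntegral.integral_zero]
    intro s hs
    rw [Set.uIcc_of_le (by linarith)] at hs
    simp only
    rw [hbd (s, δ) ⟨hs, by simp; linarith⟩ (by simp)]
    simp
  have b2 : ∀ s ∈ Set.Icc (s0 - δ) (s0 + δ), s ∉ Set.Ioo (s0 - δ) (s0 + δ) →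
      ∫ r in (0 : ℝ)..δ, φ (F (s, r)) * u s = 0 := by
    intro s hs hsn
    rw [integral_congr (g := fun _ => 0), intervalIntegral.integral_zero]
    intro r hr
    rw [Set.uIcc_of_le (by linarith)] at hr
    simp only
    rw [hbd (s, r) ⟨hs, by linarith [hr.1], hr.2⟩ (fun hm => hsn hm.1)]
    simp
  have b3 : ∫ s in (s0 - δ)..(s0 + δ), -(φ (F (s, 0)) * (1 - 0 * κ s) * v s) =
      - ∫ s in (s0 - δ)..(s0 + δ), φ (x s, y s) * v s := by
    rw [← intervalIntegral.integral_neg]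
    refine integral_congr fun s _ => ?_
    simp [hF, fermi_zero]
  have b4 : ∫ s in (s0 - δ)..(s0 + δ), φ (x s, y s) * v s =
      ∫ s in c..(c + L), φ (x s, y s) * v s := by
    rw [integral_of_le (by linarith), integral_of_le (by linarith [h.hL]),
      integral_Ioc_eq_integral_Ioo, integral_Ioc_eq_integral_Ioo]
    symm
    refine setIntegral_eq_of_subset_of_forall_sdiff_eq_zero measurableSet_Ioo
      (Set.Ioo_subset_Ioo hb.c1 hb.c2.le) ?_
    intro s hs
    rw [hzero, zero_mul]
    rintro ⟨q, hq, hqs⟩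
    have := hb.uniq s ⟨hs.1.1.le, hs.1.2⟩ q
      (Set.prod_mono Set.Ioo_subset_Icc_self Set.Ioo_subset_Icc_self hq) hqs
    rw [this] at hq
    exact hs.2 hq.1
  have b5 : ∫ s in c..(c + L), φ (x s, y s) * v s = ∫ s in (0 : ℝ)..L, φ (x s, y s) * v s := by
    have hp : Function.Periodic (fun s => φ (x s, y s) * v s) L := fun s => by
      simp [h.perx, h.pery, h.perv]
    have := hp.intervalIntegral_add_eq c 0
    rwa [zero_add] at this
  rw [step1, step2, key]
  rw [b1, b2 (s0 + δ) ⟨by linarith, le_rfl⟩ (by simp), b2 (s0 - δ) ⟨le_rfl, by linarith⟩ (by simp),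
    b3, b4, b5]
  ring

lemma inner_green (h : CurveData x y u v κ L Ω)
    (φ : ℝ × ℝ → ℝ) (hφ : ContDiff ℝ (⊤ : ℕ∞) φ) (hsupp : tsupport φ ⊆ Ω) :
    ∫ z in Ω, fderiv ℝ φ z (1, 0) = ∫ s in (0 : ℝ)..L, φ (x s, y s) * v s := by
  have hcs : HasCompactSupport φ :=
    (h.bdd.isCompact_closure).of_isClosed_subset (isClosed_tsupport φ)
      (hsupp.trans subset_closure)
  have hcd : HasCompactSupport (fun z => fderiv ℝ φ z (1, 0)) := hcs.fderiv_apply ℝ (1, 0)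
  have cdφ : Continuous (fderiv ℝ φ) := hφ.continuous_fderiv (by simp)
  have e1 : ∫ z in Ω, fderiv ℝ φ z (1, 0) = ∫ z, fderiv ℝ φ z (1, 0) := by
    refine setIntegral_eq_integral_of_forall_compl_eq_zero ?_
    intro z hz
    have : z ∉ Function.support (fderiv ℝ φ) := fun hm =>
      hz (hsupp (support_fderiv_subset ℝ hm))
    rw [Function.notMem_support.1 this]
    rfl
  have e2 : ∫ z, fderiv ℝ φ z (1, 0) = 0 := by
    have := integral_mul_fderiv_eq_neg_fderiv_mul_of_integrable (μ := (volume : Measure (ℝ × ℝ)))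
      (f := fun _ => (1 : ℝ)) (g := φ) (v := ((1 : ℝ), (0 : ℝ)))
      (by simp)
      (by
        simp only [one_mul]
        exact (cdφ.clm_apply continuous_const).integrable_of_hasCompactSupport hcd)
      (by
        simp only [one_mul]
        exact hφ.continuous.integrable_of_hasCompactSupport hcs)
      (fun _ _ => by fun_prop) (fun z _ => (hφ.differentiable (by simp)) z)
    simpa using this
  rw [e1, e2, integral_congr (g := fun _ => 0), intervalIntegral.integral_zero]
  intro s _
  simp only
  rw [image_eq_zero_of_notMem_tsupport (f := φ) fun hm => h.not_mem_curve s (hsupp hm), zero_mul]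

open scoped Manifold in
lemma area (h : CurveData x y u v κ L Ω) :
    (volume Ω).toReal = ∫ s in (0 : ℝ)..L, x s * v s := by
  have hloc : ∀ z ∈ closure Ω, ∃ U : Set (ℝ × ℝ), IsOpen U ∧ z ∈ U ∧
      ∀ φ : ℝ × ℝ → ℝ, ContDiff ℝ (⊤ : ℕ∞) φ → tsupport φ ⊆ U →
        ∫ z in Ω, fderiv ℝ φ z (1, 0) = ∫ s in (0 : ℝ)..L, φ (x s, y s) * v s := by
    intro z hz
    rw [closure_eq_self_union_frontier, h.fr] at hz
    rcases hz with hz | ⟨s0, rfl⟩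
    · exact ⟨Ω, h.op, hz, fun φ => h.inner_green φ⟩
    · obtain ⟨δ, c, hb⟩ := h.box s0
      have hpos := hb.pos
      refine ⟨_, hb.op, ⟨(s0, 0), ⟨⟨?_, ?_⟩, ?_, ?_⟩, fermi_zero s0⟩, fun φ => h.local_green hb φ⟩
      all_goals simp [hpos]
  choose! U hUo hUm hUg using hloc
  obtain ⟨t, htm, htc⟩ := h.bdd.isCompact_closure.elim_nhds_subcover U
    (fun z hz => (hUo z hz).mem_nhds (hUm z hz))
  obtain ⟨ρ, hρ⟩ := SmoothPartitionOfUnity.exists_isSubordinate 𝓘(ℝ, ℝ × ℝ)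
    (isClosed_closure (s := Ω)) (fun i : t => U i) (fun i => hUo i (htm i i.2))
    (by
      intro z hz
      obtain ⟨i, hi, hzi⟩ := Set.mem_iUnion₂.1 (htc hz)
      exact Set.mem_iUnion.2 ⟨⟨i, hi⟩, hzi⟩)
  have hsm : ∀ i, ContDiff ℝ (⊤ : ℕ∞) (fun z : ℝ × ℝ => z.1 * ρ i z) := fun i =>
    contDiff_fst.mul (ρ i).contMDiff.contDiff
  have hsum : ∀ z ∈ closure Ω, ∑ i, ρ i z = 1 := fun z hz => by
    rw [← finsum_eq_sum_of_fintype]; exact ρ.sum_eq_one hz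
  have hi : ∀ i, ∫ z in Ω, fderiv ℝ (fun z : ℝ × ℝ => z.1 * ρ i z) z (1, 0) =
      ∫ s in (0 : ℝ)..L, (x s * ρ i (x s, y s)) * v s := fun i =>
    hUg i (htm i i.2) _ (hsm i) (tsupport_mul_subset_right.trans (hρ i))
  have cx := h.cx.continuous
  have cy := h.cy.continuous
  have cv := h.cv.continuous
  have hR : ∑ i, ∫ s in (0 : ℝ)..L, (x s * ρ i (x s, y s)) * v s = ∫ s in (0 : ℝ)..L, x s * v s := by
    rw [← intervalIntegral.integral_finsetSum]
    · refine integral_congr fun s _ => ?_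
      rw [← Finset.sum_mul, ← Finset.mul_sum, hsum, mul_one]
      apply frontier_subset_closure
      rw [h.fr]
      exact ⟨s, rfl⟩
    · intro i _
      have := (ρ i).contMDiff.continuous
      exact Continuous.intervalIntegrable (by fun_prop) _ _
  have hLs : ∑ i, ∫ z in Ω, fderiv ℝ (fun z : ℝ × ℝ => z.1 * ρ i z) z (1, 0) =
      (volume Ω).toReal := by
    rw [← MeasureTheory.integral_finsetSum]
    · have : ∀ z ∈ Ω, ∑ i, fderiv ℝ (fun z : ℝ × ℝ => z.1 * ρ i z) z (1, 0) = 1 := by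
        intro z hz
        have e1 : fderiv ℝ (fun z : ℝ × ℝ => ∑ i, z.1 * ρ i z) z =
            ∑ i, fderiv ℝ (fun z : ℝ × ℝ => z.1 * ρ i z) z :=
          fderiv_fun_sum fun i _ => (hsm i).differentiable (by simp) z
        have e2 : (fun z : ℝ × ℝ => ∑ i, z.1 * ρ i z) =ᶠ[nhds z] (fun z => z.1) := by
          filter_upwards [h.op.mem_nhds hz] with w hw
          rw [← Finset.mul_sum, hsum w (subset_closure hw), mul_one]
        rw [← ContinuousLinearMap.sum_apply, ← e1, e2.fderiv_eq, fderiv_fst]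
        simp
      rw [setIntegral_congr_fun h.op.measurableSet this]
      simp [Measure.real]
    · intro i _
      have hc : Continuous (fun z => fderiv ℝ (fun z : ℝ × ℝ => z.1 * ρ i z) z (1, 0)) :=
        ((hsm i).continuous_fderiv (by simp)).clm_apply continuous_const
      exact (hc.continuousOn.integrableOn_compact h.bdd.isCompact_closure).mono_set subset_closure
  rw [← hLs, ← hR]
  exact Finset.sum_congr rfl fun i _ => hi i

end CurveData

lemma sin_sq_int (l : ℝ) (hl : 0 < l) :
    ∫ t in (0 : ℝ)..l, sin (π / l * t) ^ 2 = l / 2 := by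
  have := intervalIntegral.integral_comp_mul_left (a := 0) (b := l) (fun t => sin t ^ 2)
    (c := π / l) (by positivity)
  rw [this, integral_sin_sq]
  have : π / l * l = π := by field_simp
  simp [this]
  field_simp

/-- Instability form of Theorem 1: if the column length exceeds
`(π/2)√(L/(a·area Ω))`, there is a separated admissible test function
`u(t,s) = f(t)g(s)` (vanishing at `t = 0, l`, with `g` `L`-periodic of zero
mean) making the second variation `Φ(u)` negative. -/
theorem instability_of_long_columns
    (α : ℝ → ℝ × ℝ) (κ : ℝ → ℝ) (L l a b : ℝ) (Ω : Set (ℝ × ℝ))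
    (hL : 0 < L) (hl : 0 < l) (ha : 0 < a)
    (hsmooth : ContDiff ℝ (⊤ : ℕ∞) α)
    (harc : ∀ s, (deriv α s).1 ^ 2 + (deriv α s).2 ^ 2 = 1)
    (hper : ∀ s, α (s + L) = α s)
    (hsimple : Set.InjOn α (Set.Ico 0 L))
    (hcurv : ∀ s, deriv (deriv α) s = κ s • (-(deriv α s).2, (deriv α s).1))
    (hlaplace : ∀ s, κ s = a * ((α s).1 ^ 2 + (α s).2 ^ 2) + b)
    (hΩopen : IsOpen Ω) (hΩbdd : Bornology.IsBounded Ω)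
    (hbound : frontier Ω = α '' Set.Ico 0 L)
    (hccw : ∀ s, ∃ ε > 0, ∀ t ∈ Set.Ioo (0 : ℝ) ε,
      α s + t • (-(deriv α s).2, (deriv α s).1) ∈ Ω)
    (hA : 0 < (volume Ω).toReal)
    (hlong : l > (π / 2) * Real.sqrt (L / (a * (volume Ω).toReal))) :
    ∃ f g : ℝ → ℝ, ContDiff ℝ (⊤ : ℕ∞) f ∧ ContDiff ℝ (⊤ : ℕ∞) g ∧
      f 0 = 0 ∧ f l = 0 ∧ (∀ s, g (s + L) = g s) ∧
      (∫ s in (0 : ℝ)..L, g s) = 0 ∧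
      -(∫ s in (0 : ℝ)..L, ∫ t in (0 : ℝ)..l,
          (f t * g s) * (deriv (deriv f) t * g s + f t * deriv (deriv g) s
            + (κ s ^ 2 + 2 * a * ((α s).1 * (deriv α s).2
                - (α s).2 * (deriv α s).1)) * (f t * g s)))
        < 0 := by
  have hcd : ContDiff ℝ (⊤ : ℕ∞) (deriv α) := (contDiff_infty_iff_deriv.1 hsmooth).2
  have hdα : ∀ s, HasDerivAt α (deriv α s) s := fun s =>
    (hsmooth.differentiable (by simp) s).hasDerivAt
  have hddα : ∀ s, HasDerivAt (deriv α) (deriv (deriv α) s) s := fun s =>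
    (hcd.differentiable (by simp) s).hasDerivAt
  set x : ℝ → ℝ := fun s => (α s).1 with hxdef
  set y : ℝ → ℝ := fun s => (α s).2 with hydef
  set u : ℝ → ℝ := fun s => (deriv α s).1 with hudef
  set v : ℝ → ℝ := fun s => (deriv α s).2 with hvdef
  have hpα : Function.Periodic α L := hper
  have hpd : ∀ s, deriv α (s + L) = deriv α s := by
    intro s
    rw [← deriv_comp_add_const]
    congr 1
    funext s
    exact hper s
  have cx : ContDiff ℝ (⊤ : ℕ∞) x := contDiff_fst.comp hsmooth
  have cy : ContDiff ℝ (⊤ : ℕ∞) y := contDiff_snd.comp hsmooth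
  have cu : ContDiff ℝ (⊤ : ℕ∞) u := contDiff_fst.comp hcd
  have cv : ContDiff ℝ (⊤ : ℕ∞) v := contDiff_snd.comp hcd
  have hκeq : κ = fun s => a * (x s ^ 2 + y s ^ 2) + b := funext hlaplace
  have cκ : ContDiff ℝ (⊤ : ℕ∞) κ := by rw [hκeq]; fun_prop
  have hx : ∀ s, HasDerivAt x (u s) s := fun s => (ContinuousLinearMap.fst ℝ ℝ ℝ).hasFDerivAt.comp_hasDerivAt s (hdα s)
  have hy : ∀ s, HasDerivAt y (v s) s := fun s => (ContinuousLinearMap.snd ℝ ℝ ℝ).hasFDerivAt.comp_hasDerivAt s (hdα s)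
  have hu : ∀ s, HasDerivAt u (-(κ s * v s)) s := fun s => by
    have : HasDerivAt u (deriv (deriv α) s).1 s := (ContinuousLinearMap.fst ℝ ℝ ℝ).hasFDerivAt.comp_hasDerivAt s (hddα s)
    rw [hcurv s] at this
    simpa using this
  have hv : ∀ s, HasDerivAt v (κ s * u s) s := fun s => by
    have : HasDerivAt v (deriv (deriv α) s).2 s := (ContinuousLinearMap.snd ℝ ℝ ℝ).hasFDerivAt.comp_hasDerivAt s (hddα s)
    rw [hcurv s] at this
    simpa using this
  have h : CurveData x y u v κ L Ω :=
    { hL := hL, cx := cx, cy := cy, cu := cu, cv := cv, cκ := cκ, hx := hx, hy := hy,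
      hu := hu, hv := hv, huv := harc
      perx := fun s => by simp [hxdef, hper]
      pery := fun s => by simp [hydef, hper]
      perv := fun s => by simp [hvdef, hpd]
      inj := by
        intro c s hs t ht h1 h2
        have hst : α s = α t := Prod.ext h1 h2
        have e1 : ∀ s, α (toIcoMod hL 0 s) = α s := fun s => by
          rw [toIcoMod]
          exact hpα.sub_zsmul_eq _
        have e2 : toIcoMod hL 0 s = toIcoMod hL 0 t := by
          refine hsimple ?_ ?_ (by rw [e1, e1, hst])
          · simpa using toIcoMod_mem_Ico hL 0 s
          · simpa using toIcoMod_mem_Ico hL 0 t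
        have e3 : toIcoMod hL c s = toIcoMod hL c t := by
          rw [toIcoMod_inj] at e2 ⊢
          exact e2
        rwa [(toIcoMod_eq_self hL).2 hs, (toIcoMod_eq_self hL).2 ht] at e3
      op := hΩopen, bdd := hΩbdd
      fr := by
        rw [hbound]
        ext z
        constructor
        · rintro ⟨s, _, rfl⟩
          exact ⟨s, rfl⟩
        · rintro ⟨s, rfl⟩
          obtain ⟨s', hs', e⟩ := hpα.exists_mem_Ico₀ hL s
          exact ⟨s', hs', e.symm⟩
      ccw := by
        intro s
        obtain ⟨ε, hε, hm⟩ := hccw s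
        refine ⟨ε, hε, fun t ht => ?_⟩
        have := hm t ht
        convert this using 1
        ext <;> simp [hxdef, hydef, hudef, hvdef]
        ring }
  have harea := h.area
  set A := (volume Ω).toReal with hAdef
  have kx := cx.continuous
  have ky := cy.continuous
  have ku := cu.continuous
  have kv := cv.continuous
  have kκ := cκ.continuous
  have xL : x L = x 0 := by simpa using h.perx 0
  have yL : y L = y 0 := by simpa using h.pery 0
  have hW : ∫ s in (0 : ℝ)..L, (x s * v s - y s * u s) = 2 * A := by
    have e : ∫ s in (0 : ℝ)..L, (u s * y s + x s * v s) = 0 := by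
      rw [integral_eq_sub_of_hasDerivAt (f := fun s => x s * y s)
        (fun s _ => (hx s).mul (hy s)) (Continuous.intervalIntegrable (by fun_prop) _ _), xL, yL,
        sub_self]
    have : ∫ s in (0 : ℝ)..L, (x s * v s - y s * u s) =
        ∫ s in (0 : ℝ)..L, (2 * (x s * v s) - (u s * y s + x s * v s)) :=
      integral_congr fun s _ => by ring
    rw [this, intervalIntegral.integral_sub (Continuous.intervalIntegrable (by fun_prop) _ _)
      (Continuous.intervalIntegrable (by fun_prop) _ _), e, intervalIntegral.integral_const_mul,
      ← harea]
    ring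
  set f : ℝ → ℝ := fun t => sin (π / l * t) with hf
  have cf : ContDiff ℝ (⊤ : ℕ∞) f := by
    have := Real.contDiff_sin (n := (⊤ : ℕ∞))
    fun_prop
  have hlin : ∀ t, HasDerivAt (fun t => π / l * t) (π / l) t := fun t => by
    simpa using (hasDerivAt_id t).const_mul (π / l)
  have hf1 : deriv f = fun t => cos (π / l * t) * (π / l) := funext fun t => (hlin t).sin.deriv
  have hf2 : deriv (deriv f) = fun t => -(π / l) ^ 2 * f t := by
    rw [hf1]
    funext t
    rw [((hlin t).cos.mul_const (π / l)).deriv]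
    simp only [hf]
    ring
  set W : ℝ → ℝ := fun s => κ s ^ 2 + 2 * a * (x s * v s - y s * u s) with hWdef
  -- the second variation of a separated function
  have hΦ : ∀ g : ℝ → ℝ, (∫ s in (0 : ℝ)..L, ∫ t in (0 : ℝ)..l,
          (f t * g s) * (deriv (deriv f) t * g s + f t * deriv (deriv g) s
            + W s * (f t * g s))) =
      (l / 2) * ∫ s in (0 : ℝ)..L, g s * (-(π / l) ^ 2 * g s + deriv (deriv g) s + W s * g s) := by
    intro g
    rw [← intervalIntegral.integral_const_mul]
    refine integral_congr fun s _ => ?_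
    rw [← sin_sq_int l hl, ← intervalIntegral.integral_mul_const]
    refine integral_congr fun t _ => ?_
    simp only [hf2]
    simp only [hf]
    ring
  have hdκ : ∀ s, HasDerivAt κ (deriv κ s) s := fun s =>
    (cκ.differentiable (by simp) s).hasDerivAt
  have kdκ : Continuous (deriv κ) := cκ.continuous_deriv (by simp)
  have hu2 : deriv (deriv u) = fun s => -(deriv κ s * v s + κ s * (κ s * u s)) := by
    have : deriv u = fun s => -(κ s * v s) := funext fun s => (hu s).deriv
    rw [this]
    funext s
    exact ((hdκ s).mul (hv s)).neg.deriv
  have hv2 : deriv (deriv v) = fun s => deriv κ s * u s + κ s * -(κ s * v s) := by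
    have : deriv v = fun s => κ s * u s := funext fun s => (hv s).deriv
    rw [this]
    funext s
    exact ((hdκ s).mul (hu s)).deriv
  have hsum : (∫ s in (0 : ℝ)..L, u s * (-(π / l) ^ 2 * u s + deriv (deriv u) s + W s * u s)) +
      (∫ s in (0 : ℝ)..L, v s * (-(π / l) ^ 2 * v s + deriv (deriv v) s + W s * v s)) =
      -(π / l) ^ 2 * L + 4 * a * A := by
    have kW : Continuous W := by fun_prop
    rw [hu2, hv2, ← intervalIntegral.integral_add (Continuous.intervalIntegrable (by fun_prop) _ _)
      (Continuous.intervalIntegrable (by fun_prop) _ _)]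
    have : ∫ s in (0 : ℝ)..L, (-(π / l) ^ 2 + 2 * a * (x s * v s - y s * u s)) =
        -(π / l) ^ 2 * L + 4 * a * A := by
      rw [intervalIntegral.integral_add (Continuous.intervalIntegrable (by fun_prop) _ _)
        (Continuous.intervalIntegrable (by fun_prop) _ _), intervalIntegral.integral_const_mul, hW,
        intervalIntegral.integral_const]
      simp
      ring
    rw [← this]
    refine integral_congr fun s _ => ?_
    simp only [hWdef]
    linear_combination (-(π / l) ^ 2 + 2 * a * (x s * v s - y s * u s)) * h.huv s
  have hposi : 0 < -(π / l) ^ 2 * L + 4 * a * A := by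
    have h1 : (π / 2) ^ 2 * (L / (a * A)) < l ^ 2 := by
      have h0 : 0 ≤ L / (a * A) := by positivity
      have h2 : (π / 2 * √(L / (a * A))) ^ 2 < l ^ 2 :=
        pow_lt_pow_left₀ hlong (by positivity) (by norm_num)
      rwa [mul_pow, Real.sq_sqrt h0] at h2
    rw [← mul_div_assoc, div_lt_iff₀ (by positivity)] at h1
    have h3 : (π / l) ^ 2 * L < 4 * a * A := by
      rw [div_pow, div_mul_eq_mul_div, div_lt_iff₀ (by positivity)]
      nlinarith
    linarith
  have hf0 : f 0 = 0 := by simp [hf]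
  have hfl : f l = 0 := by
    simp only [hf]
    rw [div_mul_cancel₀ _ hl.ne', sin_pi]
  by_cases hc : 0 < ∫ s in (0 : ℝ)..L, u s * (-(π / l) ^ 2 * u s + deriv (deriv u) s + W s * u s)
  · refine ⟨f, u, cf, cu, hf0, hfl, fun s => by simp [hudef, hpd], ?_, ?_⟩
    · rw [integral_eq_sub_of_hasDerivAt (fun s _ => hx s) (ku.intervalIntegrable _ _), xL, sub_self]
    · have := hΦ u
      have h2 := mul_pos (half_pos hl) hc
      rw [← this] at h2
      exact neg_lt_zero.2 h2
  · refine ⟨f, v, cf, cv, hf0, hfl, fun s => by simp [hvdef, hpd], ?_, ?_⟩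
    · rw [integral_eq_sub_of_hasDerivAt (fun s _ => hy s) (kv.intervalIntegrable _ _), yL, sub_self]
    · have := hΦ v
      have h2 := mul_pos (half_pos hl) (show 0 < ∫ s in (0 : ℝ)..L,
        v s * (-(π / l) ^ 2 * v s + deriv (deriv v) s + W s * v s) by linarith)
      rw [← this] at h2
      exact neg_lt_zero.2 h2
end
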